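/- Let X be a K-convex complex Banach space and p ∈ (1,∞). Then there exist c, C ∈ (0,∞) and A ∈ [1,∞) such that for every n,d ∈ ℕ with 0 ≤ d ≤ n−1, every function f : {-1,1}^n → X in the d-th tail space satisfies, for all t ≥ 0, ‖e^{-tΔ} f‖_{L_p({-1,1}^n;X)} ≤ C e^{-c·d·min{t, t^A}} · ‖f‖_{L_p({-1,1}^n;X)}. -/

import Mathlib

open scoped BigOperators ENNReal NNReal

noncomputable section

namespace HammingCube

variable {X : Type*} [NormedAddCommGroup X] [NormedSpace ℂ X]

/-- The sign ±1 associated to a boolean coordinate. -/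
def sgn (b : Bool) : ℝ := if b then 1 else -1

/-- The Walsh function `w_A(ε) = ∏_{i ∈ A} ε_i`. -/
def walsh {n : ℕ} (A : Finset (Fin n)) (ε : Fin n → Bool) : ℝ := ∏ i ∈ A, sgn (ε i)

/-- The Fourier–Walsh coefficient `f̂(A) = 2⁻ⁿ ∑_δ f(δ) w_A(δ)`. -/
def coeff {n : ℕ} (f : (Fin n → Bool) → X) (A : Finset (Fin n)) : X :=
  (2 ^ n : ℝ)⁻¹ • ∑ δ : Fin n → Bool, walsh A δ • f δ

/-- `f` has degree at most `d`: `f̂(A) = 0` whenever `|A| > d`. -/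
def degLE {n : ℕ} (f : (Fin n → Bool) → X) (d : ℕ) : Prop :=
  ∀ A : Finset (Fin n), d < A.card → coeff f A = 0

/-- `f` belongs to the `d`-th tail space: `f̂(A) = 0` whenever `|A| < d`. -/
def tailSpace {n : ℕ} (f : (Fin n → Bool) → X) (d : ℕ) : Prop :=
  ∀ A : Finset (Fin n), A.card < d → coeff f A = 0

/-- The heat semigroup `e^{-tΔ} f = ∑_A e^{-t|A|} f̂(A) w_A`. -/
def heat {n : ℕ} (t : ℝ) (f : (Fin n → Bool) → X) : (Fin n → Bool) → X :=
  fun ε => ∑ A : Finset (Fin n), Real.exp (-t * A.card) • walsh A ε • coeff f A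

/-- The hypercube Laplacian `Δ f = ∑_A |A| f̂(A) w_A`. -/
def lap {n : ℕ} (f : (Fin n → Bool) → X) : (Fin n → Bool) → X :=
  fun ε => ∑ A : Finset (Fin n), (A.card : ℝ) • walsh A ε • coeff f A

/-- The fractional Laplacian `Δ^γ f = ∑_A |A|^γ f̂(A) w_A`. -/
def fracLap {n : ℕ} (γ : ℝ) (f : (Fin n → Bool) → X) : (Fin n → Bool) → X :=
  fun ε => ∑ A : Finset (Fin n), ((A.card : ℝ) ^ γ) • walsh A ε • coeff f A

/-- The `i`-th discrete partial derivative. -/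
def pderiv {n : ℕ} (i : Fin n) (f : (Fin n → Bool) → X) : (Fin n → Bool) → X :=
  fun ε => (2 : ℝ)⁻¹ • (f ε - f (Function.update ε i (!(ε i))))

/-- The vector-valued `L_p` norm `(2⁻ⁿ ∑_ε ‖f(ε)‖^p)^{1/p}` for finite `p`. -/
def lpNorm {n : ℕ} {Y : Type*} [NormedAddCommGroup Y] (p : ℝ)
    (f : (Fin n → Bool) → Y) : ℝ :=
  ((2 ^ n : ℝ)⁻¹ * ∑ ε : Fin n → Bool, ‖f ε‖ ^ p) ^ (1 / p)

/-- The `L_∞` norm `max_ε ‖f(ε)‖`. -/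
def linfNorm {n : ℕ} {Y : Type*} [NormedAddCommGroup Y]
    (f : (Fin n → Bool) → Y) : ℝ :=
  ⨆ ε : Fin n → Bool, ‖f ε‖

/-- The `L_p` norm for `p ∈ [1,∞]` encoded as `p : ℝ≥0∞`. -/
def lpNormE {n : ℕ} {Y : Type*} [NormedAddCommGroup Y] (p : ℝ≥0∞)
    (f : (Fin n → Bool) → Y) : ℝ :=
  if p = ⊤ then linfNorm f else lpNorm p.toReal f

/-- The scalar `L_p` norm of the gradient `‖(∑_i |∂_i f|²)^{1/2}‖_{L_p}`. -/
def gradLpNorm {n : ℕ} (p : ℝ) (f : (Fin n → Bool) → ℂ) : ℝ :=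
  lpNorm p (fun ε => Real.sqrt (∑ i : Fin n, ‖pderiv i f ε‖ ^ 2))

/-- The Rademacher projection `Rad f(ε) = ∑_i f̂({i}) ε_i`. -/
def Rad {n : ℕ} (f : (Fin n → Bool) → X) : (Fin n → Bool) → X :=
  fun ε => ∑ i : Fin n, sgn (ε i) • coeff f {i}

/-- A complex Banach space is `K`-convex if the Rademacher projections are uniformly
bounded on `L_q` for some `q ∈ (1,∞)`. -/
def KConvex (X : Type*) [NormedAddCommGroup X] [NormedSpace ℂ X] : Prop :=
  ∃ q : ℝ, 1 < q ∧ ∃ M : ℝ, ∀ (n : ℕ) (f : (Fin n → Bool) → X),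
    lpNorm q (Rad f) ≤ M * lpNorm q f

/-- `X` has cotype `q` with constant `C`. -/
def HasCotype (X : Type*) [NormedAddCommGroup X] [NormedSpace ℂ X] (q C : ℝ) : Prop :=
  ∀ (n : ℕ) (x : Fin n → X),
    C⁻¹ * (∑ i : Fin n, ‖x i‖ ^ q) ^ (1 / q) ≤
      ((2 ^ n : ℝ)⁻¹ * ∑ ε : Fin n → Bool, ‖∑ i : Fin n, sgn (ε i) • x i‖ ^ q) ^ (1 / q)

/-- The entropy `Ent(h)` of a nonnegative function on the cube. -/
def entropy {n : ℕ} (h : (Fin n → Bool) → ℝ) : ℝ :=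
  (2 ^ n : ℝ)⁻¹ * ∑ ε : Fin n → Bool, h ε * Real.log (h ε) -
    ((2 ^ n : ℝ)⁻¹ * ∑ ε : Fin n → Bool, h ε) *
      Real.log ((2 ^ n : ℝ)⁻¹ * ∑ ε : Fin n → Bool, h ε)

/-- The `L_∞` norm of the gradient `max_ε (∑_i |∂_i f(ε)|²)^{1/2}`. -/
def gradLinfNorm {n : ℕ} (f : (Fin n → Bool) → ℂ) : ℝ :=
  ⨆ ε : Fin n → Bool, Real.sqrt (∑ i : Fin n, ‖pderiv i f ε‖ ^ 2)


/-!
If `X` is `K`-convex then it cannot contain copies of `ℓ₁ⁿ` with uniform constants, so it satisfies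
Beck's convexity condition. That condition passes to the `L_p` spaces of all the cubes with one and
the same constant. Since `e^{-tΔ}` is a convex combination of commuting contractive projections,
namely conditional expectations, an argument of Pisier turns Beck convexity into a lower bound for
`1 + e^{-tΔ}` that is uniform in `n` and `t`. This bounds the resolvent of `-Δ` on the right
half-plane by a multiple of `1 / |μ|`, and Laplace inversion then gives `‖e^{-zΔ}‖ ≤ 2` on a sector
that does not depend on `n`.

For `f` in the `d`-th tail space, `e^{-zΔ} f` is a polynomial in `w = e^{-z}` that vanishes to order
`d` at `w = 0`, and the maximum principle in `w` yields the decay for large times. For small times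
one applies the maximum principle on a truncated sector to `e^{c d z^A} e^{-zΔ} f`, where `A` is
chosen so that `Re z^A = 0` on the two boundary rays.
-/

/-! ### Walsh functions -/

theorem sgn_mul_self (b : Bool) : sgn b * sgn b = 1 := by cases b <;> simp [sgn]

theorem abs_sgn (b : Bool) : |sgn b| = 1 := by cases b <;> simp [sgn]

section Walsh

variable {n : ℕ}

theorem walsh_eq_prod_ite (A : Finset (Fin n)) (ε : Fin n → Bool) :
    walsh A ε = ∏ i, if i ∈ A then sgn (ε i) else 1 := by
  rw [walsh, Finset.prod_ite_mem, Finset.univ_inter]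

theorem sum_walsh_mul_walsh (A B : Finset (Fin n)) :
    ∑ δ : Fin n → Bool, walsh A δ * walsh B δ = if A = B then 2 ^ n else 0 := by
  simp_rw [walsh_eq_prod_ite, ← Finset.prod_mul_distrib]
  rw [← Fintype.prod_sum fun i (x : Bool) =>
    (if i ∈ A then sgn x else 1) * (if i ∈ B then sgn x else 1)]
  split_ifs with h
  · subst h
    have hfactor (i : Fin n) : ∑ x : Bool,
        (if i ∈ A then sgn x else 1) * (if i ∈ A then sgn x else 1) = (2 : ℝ) := by
      by_cases hi : i ∈ A <;> norm_num [hi, sgn]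
    simp_rw [hfactor]
    simp
  · obtain ⟨i, hi⟩ : ∃ i, ¬(i ∈ A ↔ i ∈ B) := by
      by_contra! hAB
      exact h (Finset.ext hAB)
    refine Finset.prod_eq_zero (Finset.mem_univ i) ?_
    by_cases hA : i ∈ A <;> by_cases hB : i ∈ B <;> simp [hA, hB, sgn] at hi ⊢

theorem prod_one_add_mul_sgn (u : ℂ) (ε δ : Fin n → Bool) :
    ∏ k, (1 + u * (sgn (ε k) * sgn (δ k) : ℝ)) =
      ∑ A : Finset (Fin n), u ^ A.card * (walsh A ε * walsh A δ : ℝ) := by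
  rw [Finset.prod_one_add, Finset.powerset_univ]
  refine Finset.sum_congr rfl fun A _ => ?_
  rw [Finset.prod_mul_distrib, Finset.prod_const, ← Complex.ofReal_prod, Finset.prod_mul_distrib,
    walsh, walsh]

theorem sum_walsh_mul_walsh_dual (ε δ : Fin n → Bool) :
    ∑ A : Finset (Fin n), walsh A ε * walsh A δ = if ε = δ then 2 ^ n else 0 := by
  have hprod : ∑ A : Finset (Fin n), walsh A ε * walsh A δ = ∏ k, (1 + sgn (ε k) * sgn (δ k)) := by
    have h := prod_one_add_mul_sgn 1 ε δ
    simp only [one_pow, one_mul] at h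
    exact_mod_cast h.symm
  rw [hprod]
  split_ifs with h
  · subst h
    simp_rw [sgn_mul_self]
    norm_num
  · obtain ⟨i, hi⟩ : ∃ i, ε i ≠ δ i := Function.ne_iff.1 h
    refine Finset.prod_eq_zero (Finset.mem_univ i) ?_
    cases h1 : ε i <;> cases h2 : δ i <;> simp [h1, h2, sgn] at hi ⊢

theorem sum_walsh_mul_prod_one_add_mul_sgn (u : ℂ) (B : Finset (Fin n)) (ε : Fin n → Bool) :
    ∑ δ : Fin n → Bool, (walsh B δ : ℂ) * ∏ k, (1 + u * (sgn (ε k) * sgn (δ k) : ℝ)) =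
      2 ^ n * u ^ B.card * walsh B ε := by
  simp_rw [prod_one_add_mul_sgn, Finset.mul_sum]
  rw [Finset.sum_comm]
  have horth (A : Finset (Fin n)) :
      ∑ δ : Fin n → Bool, (walsh B δ : ℂ) * (u ^ A.card * (walsh A ε * walsh A δ : ℝ)) =
        u ^ A.card * walsh A ε * ((if B = A then 2 ^ n else 0 : ℝ) : ℂ) := by
    rw [← sum_walsh_mul_walsh, Complex.ofReal_sum, Finset.mul_sum]
    refine Finset.sum_congr rfl fun δ _ => ?_
    push_cast
    ring
  simp_rw [horth]
  rw [Finset.sum_eq_single B (fun A _ hA => by simp [Ne.symm hA]) (by simp)]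
  simp
  ring

theorem coeff_walsh_smul (A B : Finset (Fin n)) (v : X) :
    coeff (fun ε => walsh B ε • v) A = if A = B then v else 0 := by
  simp_rw [coeff, smul_smul]
  rw [← Finset.sum_smul, sum_walsh_mul_walsh, smul_smul]
  split_ifs <;> simp

theorem sum_walsh_smul_coeff (f : (Fin n → Bool) → X) (ε : Fin n → Bool) :
    ∑ A : Finset (Fin n), walsh A ε • coeff f A = f ε := by
  simp_rw [coeff, Finset.smul_sum, smul_smul]
  rw [Finset.sum_comm]
  have hkernel (δ : Fin n → Bool) :
      ∑ A : Finset (Fin n), (walsh A ε * ((2 ^ n : ℝ)⁻¹ * walsh A δ)) • f δ =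
        if ε = δ then f δ else 0 := by
    simp_rw [mul_left_comm _ (2 ^ n : ℝ)⁻¹]
    rw [← Finset.sum_smul, ← Finset.mul_sum, sum_walsh_mul_walsh_dual]
    split_ifs <;> simp
  simp [hkernel]

end Walsh

/-! ### Absence of `ℓ₁` in `K`-convex spaces -/

section Khinchine

variable {m : ℕ}

theorem norm_prod_one_add_I_div_sqrt_le_two {b : Fin m → ℝ} (hb : ∀ k, b k ^ 2 = 1) :
    ‖∏ k, (1 + Complex.I / (√m : ℝ) * (b k : ℝ))‖ ≤ 2 := by
  have hfactor (k : Fin m) : ‖(1 + Complex.I / (√m : ℝ) * (b k : ℝ) : ℂ)‖ ^ 2 = 1 + 1 / m := by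
    have hre_im : (1 + Complex.I / (√m : ℝ) * (b k : ℝ) : ℂ) =
        ((1 : ℝ) : ℂ) + ((b k / √m : ℝ) : ℂ) * Complex.I := by
      push_cast
      ring
    rw [hre_im, ← Complex.normSq_eq_norm_sq, Complex.normSq_add_mul_I, div_pow,
      Real.sq_sqrt m.cast_nonneg, hb]
    simp
  refine le_of_sq_le_sq ?_ zero_le_two
  rw [norm_prod, ← Finset.prod_pow]
  simp_rw [hfactor]
  rw [Finset.prod_const, Finset.card_univ, Fintype.card_fin]
  calc (1 + 1 / (m : ℝ)) ^ m ≤ Real.exp (1 / m) ^ m := by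
        gcongr
        linarith [Real.add_one_le_exp (1 / (m : ℝ))]
    _ = Real.exp (m * (1 / m)) := (Real.exp_nat_mul _ _).symm
    _ ≤ Real.exp 1 := by
        gcongr
        rw [mul_one_div]
        exact div_self_le_one _
    _ ≤ 2 ^ 2 := by linarith [Real.exp_one_lt_d9]

/-- Testing the sum against the Riesz product `∏ₖ (1 + i εₖ δₖ / √m)` shows this form of
Khinchine's inequality. -/
theorem two_pow_mul_sqrt_le_sum_abs_sum_sgn (ε : Fin m → Bool) :
    2 ^ m * (√m / 2) ≤ ∑ δ : Fin m → Bool, |∑ j, sgn (ε j) * sgn (δ j)| := by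
  let u : ℂ := Complex.I / (√m : ℝ)
  let riesz (δ : Fin m → Bool) : ℂ := ∏ k, (1 + u * (sgn (ε k) * sgn (δ k) : ℝ))
  have hpair : ∑ δ, ((∑ j, sgn (ε j) * sgn (δ j) : ℝ) : ℂ) * riesz δ = 2 ^ m * (m * u) := by
    calc ∑ δ, ((∑ j, sgn (ε j) * sgn (δ j) : ℝ) : ℂ) * riesz δ
        = ∑ j, sgn (ε j) * ∑ δ, (walsh {j} δ : ℂ) * riesz δ := by
          simp_rw [Complex.ofReal_sum, Finset.sum_mul, Finset.mul_sum]
          rw [Finset.sum_comm]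
          simp [walsh, mul_assoc]
      _ = ∑ _j : Fin m, 2 ^ m * u := by
          refine Finset.sum_congr rfl fun j _ => ?_
          have hsgn : (sgn (ε j) : ℂ) * sgn (ε j) = 1 := mod_cast sgn_mul_self (ε j)
          rw [sum_walsh_mul_prod_one_add_mul_sgn, walsh, Finset.prod_singleton,
            Finset.card_singleton]
          linear_combination 2 ^ m * u * hsgn
      _ = 2 ^ m * (m * u) := by
          simp
          ring
  have hnorm : ‖2 ^ m * (m * u)‖ = 2 ^ m * √m := by
    simp only [u, norm_mul, norm_pow, norm_div, Complex.norm_two, Complex.norm_natCast,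
      Complex.norm_I, Complex.norm_real, Real.norm_of_nonneg (Real.sqrt_nonneg _)]
    rw [mul_one_div, Real.div_sqrt]
  have hle : 2 ^ m * √m ≤ ∑ δ : Fin m → Bool, |∑ j, sgn (ε j) * sgn (δ j)| * 2 := by
    rw [← hnorm, ← hpair]
    refine norm_sum_le_of_le _ fun δ _ => ?_
    rw [norm_mul, Complex.norm_real, Real.norm_eq_abs]
    gcongr
    refine norm_prod_one_add_I_div_sqrt_le_two fun k => ?_
    rw [mul_pow, pow_two, pow_two, sgn_mul_self, sgn_mul_self, one_mul]
  rw [← Finset.sum_mul] at hle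
  linarith

end Khinchine

section LpNorm

variable {n : ℕ} {Y Z : Type*} [NormedAddCommGroup Y] [NormedAddCommGroup Z] {p : ℝ}

theorem lpNorm_nonneg (f : (Fin n → Bool) → Y) : 0 ≤ lpNorm p f := by
  unfold lpNorm
  positivity

theorem lpNorm_mono (hp : 0 < p) {f : (Fin n → Bool) → Y} {g : (Fin n → Bool) → Z}
    (hfg : ∀ ε, ‖f ε‖ ≤ ‖g ε‖) : lpNorm p f ≤ lpNorm p g := by
  unfold lpNorm
  gcongr with ε
  exact hfg ε

theorem lpNorm_const (hp : 0 < p) (v : Y) : lpNorm p (fun _ : Fin n → Bool => v) = ‖v‖ := by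
  simp [lpNorm, Real.rpow_rpow_inv (norm_nonneg v) hp.ne']

end LpNorm

theorem Rad_eq_sum {m : ℕ} (x : (Fin m → Bool) → X) (ε : Fin m → Bool) :
    Rad x ε = ∑ δ : Fin m → Bool, ((2 ^ m : ℝ)⁻¹ * ∑ j, sgn (ε j) * sgn (δ j)) • x δ := by
  simp only [Rad, coeff, walsh, Finset.prod_singleton, Finset.smul_sum, smul_smul]
  rw [Finset.sum_comm]
  refine Finset.sum_congr rfl fun δ _ => ?_
  simp_rw [← Finset.sum_smul, Finset.mul_sum, mul_left_comm]

/-- A `K`-convex space does not contain uniformly isomorphic copies of `ℓ₁ⁿ`: otherwise `Rad`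
would have norm of order at least `√m` on the functions taking `{-1,1}^m` to the `ℓ₁` basis. -/
theorem KConvex.exists_norm_sum_smul_lt (hX : KConvex X) :
    ∃ m : ℕ, ∀ x : (Fin m → Bool) → X, (∀ δ, ‖x δ‖ ≤ 1) →
      ∃ a : (Fin m → Bool) → ℝ, ‖∑ δ, a δ • x δ‖ < 1 / 2 * ∑ δ, |a δ| := by
  obtain ⟨q, hq, M, hM⟩ := hX
  have hq0 : 0 < q := by linarith
  obtain ⟨m, hm⟩ := exists_nat_gt ((4 * |M|) ^ 2)
  have hMm : |M| < √m / 4 := by linarith [Real.lt_sqrt_of_sq_lt hm]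
  refine ⟨m, fun x hx => ?_⟩
  by_contra! hℓ₁
  have hRad (ε : Fin m → Bool) : √m / 4 ≤ ‖Rad x ε‖ := by
    rw [Rad_eq_sum]
    refine le_trans ?_ (hℓ₁ _)
    simp_rw [abs_mul, abs_of_pos (show (0 : ℝ) < (2 ^ m)⁻¹ by positivity), ← Finset.mul_sum]
    calc √m / 4 = 1 / 2 * ((2 ^ m)⁻¹ * (2 ^ m * (√m / 2))) := by
          field_simp
          norm_num
      _ ≤ _ := by
          gcongr
          exact two_pow_mul_sqrt_le_sum_abs_sum_sgn ε
  have hlower : √m / 4 ≤ lpNorm q (Rad x) := by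
    rw [← Real.norm_of_nonneg (show 0 ≤ √m / 4 by positivity), ← lpNorm_const hq0 (n := m)]
    exact lpNorm_mono hq0 fun ε => by
      rw [Real.norm_of_nonneg (by positivity)]
      exact hRad ε
  have hupper : lpNorm q x ≤ 1 := by
    rw [← norm_one (α := ℝ), ← lpNorm_const hq0 (n := m)]
    exact lpNorm_mono hq0 fun δ => by simpa using hx δ
  have hMx : M * lpNorm q x ≤ |M| * 1 :=
    mul_le_mul (le_abs_self M) hupper (lpNorm_nonneg x) (abs_nonneg M)
  linarith [hM m x]

/-! ### Beck convexity -/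

/-- Beck's convexity condition with constant `ρ` for families indexed by `J`: every family of
vectors in the unit ball has a signed sum of norm at most `ρ`. It has content when
`ρ < Fintype.card J`, and then says that `E` contains no almost isometric copy of `ℓ₁` over `J`. -/
def BeckConvex (J E : Type*) [Fintype J] [NormedAddCommGroup E] [NormedSpace ℝ E] (ρ : ℝ) : Prop :=
  ∀ x : J → E, (∀ j, ‖x j‖ ≤ 1) → ∃ ε : J → Bool, ‖∑ j, sgn (ε j) • x j‖ ≤ ρ

section Beck

variable {J E : Type*} [Fintype J] [NormedAddCommGroup E] [NormedSpace ℝ E] {ρ p : ℝ}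

theorem norm_sgn_smul (b : Bool) (v : E) : ‖sgn b • v‖ = ‖v‖ := by
  rw [norm_smul, Real.norm_eq_abs, abs_sgn, one_mul]

theorem norm_sum_sgn_smul_le (ε : J → Bool) (x : J → E) :
    ‖∑ j, sgn (ε j) • x j‖ ≤ ∑ j, ‖x j‖ :=
  norm_sum_le_of_le _ fun j _ => (norm_sgn_smul (ε j) (x j)).le

theorem BeckConvex.nonneg (h : BeckConvex J E ρ) : 0 ≤ ρ :=
  have ⟨_, hε⟩ := h 0 (by simp)
  (norm_nonneg _).trans hε

theorem BeckConvex.exists_norm_sum_le_mul (h : BeckConvex J E ρ) {R : ℝ} (hR : 0 ≤ R)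
    {x : J → E} (hx : ∀ j, ‖x j‖ ≤ R) : ∃ ε : J → Bool, ‖∑ j, sgn (ε j) • x j‖ ≤ ρ * R := by
  obtain rfl | hR := hR.eq_or_lt
  · exact ⟨fun _ => true, by simp [fun j => norm_le_zero_iff.1 (hx j)]⟩
  obtain ⟨ε, hε⟩ := h (fun j => R⁻¹ • x j) fun j => by
    rw [norm_smul, norm_inv, Real.norm_of_nonneg hR.le, inv_mul_le_one₀ hR]
    exact hx j
  refine ⟨ε, ?_⟩
  simp_rw [smul_comm _ R⁻¹, ← Finset.smul_sum] at hε
  rwa [norm_smul, norm_inv, Real.norm_of_nonneg hR.le, inv_mul_le_iff₀ hR, mul_comm] at hε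

theorem beckConvex_of_exists_norm_sum_smul_lt
    (h : ∀ x : J → E, (∀ j, ‖x j‖ ≤ 1) →
      ∃ a : J → ℝ, ‖∑ j, a j • x j‖ < 1 / 2 * ∑ j, |a j|) :
    BeckConvex J E (Fintype.card J - 1 / 2) := by
  intro x hx
  obtain ⟨a, ha⟩ := h x hx
  have hpos : 0 < ∑ j, |a j| := by linarith [norm_nonneg (∑ j, a j • x j)]
  obtain ⟨i, -, hi⟩ := Finset.exists_ne_zero_of_sum_ne_zero hpos.ne'
  have : Nonempty J := ⟨i⟩
  obtain ⟨j₀, hmax⟩ := Finite.exists_max fun j => |a j|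
  let α := |a j₀|
  have hα : 0 < α := ((abs_nonneg _).lt_of_ne' hi).trans_le (hmax i)
  let ε (j : J) : Bool := decide (0 ≤ a j)
  have hsgn (j : J) : sgn (ε j) * |a j| = a j := by
    rcases le_or_gt 0 (a j) with hj | hj
    · simp [ε, sgn, hj, abs_of_nonneg hj]
    · simp [ε, sgn, hj.not_ge, abs_of_neg hj]
  refine ⟨ε, le_of_mul_le_mul_left ?_ hα⟩
  have hsplit : α • ∑ j, sgn (ε j) • x j =
      ∑ j, a j • x j + ∑ j, (α - |a j|) • sgn (ε j) • x j := by
    rw [Finset.smul_sum, ← Finset.sum_add_distrib]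
    refine Finset.sum_congr rfl fun j _ => ?_
    rw [sub_smul, smul_smul |a j|, mul_comm, hsgn, add_sub_cancel]
  have hrest : ‖∑ j, (α - |a j|) • sgn (ε j) • x j‖ ≤ ∑ j, (α - |a j|) :=
    norm_sum_le_of_le _ fun j _ => by
      have hj : 0 ≤ α - |a j| := sub_nonneg.2 (hmax j)
      rw [norm_smul, norm_sgn_smul, Real.norm_of_nonneg hj]
      exact mul_le_of_le_one_right hj (hx j)
  have hmax_le : α ≤ ∑ j, |a j| :=
    Finset.single_le_sum (f := fun j => |a j|) (fun j _ => abs_nonneg _) (Finset.mem_univ j₀)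
  calc α * ‖∑ j, sgn (ε j) • x j‖ = ‖α • ∑ j, sgn (ε j) • x j‖ := by
        rw [norm_smul, Real.norm_of_nonneg hα.le]
    _ ≤ 1 / 2 * ∑ j, |a j| + ∑ j, (α - |a j|) := by
        rw [hsplit]
        exact norm_add_le_of_le ha.le hrest
    _ = α * Fintype.card J - 1 / 2 * ∑ j, |a j| := by
        rw [Finset.sum_sub_distrib, Finset.sum_const, Finset.card_univ, nsmul_eq_mul]
        ring
    _ ≤ α * (Fintype.card J - 1 / 2) := by linarith

/-- Apply the condition to the parts of length `m` of the vectors. -/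
theorem BeckConvex.exists_norm_sum_le_sum_norm_sub (h : BeckConvex J E ρ) {m : ℝ} (hm : 0 ≤ m)
    {x : J → E} (hx : ∀ j, m ≤ ‖x j‖) :
    ∃ ε : J → Bool, ‖∑ j, sgn (ε j) • x j‖ ≤ ∑ j, ‖x j‖ - (Fintype.card J - ρ) * m := by
  let y (j : J) : E := (m / ‖x j‖) • x j
  have hy (j : J) : ‖y j‖ ≤ m := by
    rw [norm_smul, Real.norm_of_nonneg (by positivity)]
    exact mul_le_of_le_div₀ hm (norm_nonneg _) le_rfl
  have hxy (j : J) : ‖x j - y j‖ ≤ ‖x j‖ - m := by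
    rcases eq_or_ne (x j) 0 with h0 | h0
    · simp [y, h0, hm.antisymm ((hx j).trans_eq (by rw [h0, norm_zero]))]
    have hpos : 0 < ‖x j‖ := norm_pos_iff.2 h0
    have hle : m / ‖x j‖ ≤ 1 := (div_le_one hpos).2 (hx j)
    have hsub : x j - y j = (1 - m / ‖x j‖) • x j := by
      rw [sub_smul, one_smul]
    rw [hsub, norm_smul, Real.norm_of_nonneg (sub_nonneg.2 hle), sub_mul, one_mul,
      div_mul_cancel₀ _ hpos.ne']
  obtain ⟨ε, hε⟩ := h.exists_norm_sum_le_mul hm hy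
  refine ⟨ε, ?_⟩
  calc ‖∑ j, sgn (ε j) • x j‖
      = ‖∑ j, sgn (ε j) • y j + ∑ j, sgn (ε j) • (x j - y j)‖ := by
        simp_rw [← Finset.sum_add_distrib, ← smul_add, add_sub_cancel]
    _ ≤ ρ * m + ∑ j, (‖x j‖ - m) :=
        norm_add_le_of_le hε ((norm_sum_sgn_smul_le _ _).trans (Finset.sum_le_sum fun j _ => hxy j))
    _ = ∑ j, ‖x j‖ - (Fintype.card J - ρ) * m := by
        rw [Finset.sum_sub_distrib, Finset.sum_const, Finset.card_univ, nsmul_eq_mul]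
        ring

theorem sum_le_card_of_sum_rpow_eq_card (hp : 1 < p) {s : J → ℝ} (hs : ∀ j, 0 ≤ s j)
    (hsum : ∑ j, s j ^ p = Fintype.card J) : ∑ j, s j ≤ Fintype.card J := by
  have hbernoulli (j : J) : 1 + p * (s j - 1) ≤ s j ^ p := by
    simpa using one_add_mul_self_le_rpow_one_add (by linarith [hs j] : -1 ≤ s j - 1) hp.le
  have hle := Finset.sum_le_sum fun j (_ : j ∈ Finset.univ) => hbernoulli j
  rw [hsum, Finset.sum_add_distrib, ← Finset.mul_sum, Finset.sum_sub_distrib] at hle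
  simp only [Finset.sum_const, Finset.card_univ, nsmul_eq_mul, mul_one] at hle
  nlinarith

/-- Bernoulli's inequality `1 + p (s - 1) ≤ s ^ p` has a gap of at least `(p - 1) / 2` wherever
`s < (p - 1) / (2 p)`. -/
theorem le_or_sum_le_of_sum_rpow_eq_card (hp : 1 < p) {s : J → ℝ} (hs : ∀ j, 0 ≤ s j)
    (hsum : ∑ j, s j ^ p = Fintype.card J) :
    (∀ j, (p - 1) / (2 * p) ≤ s j) ∨ ∑ j, s j ≤ Fintype.card J - (p - 1) / (2 * p) := by
  classical
  refine or_iff_not_imp_left.2 fun hsmall => ?_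
  push Not at hsmall
  obtain ⟨i, hi⟩ := hsmall
  have : 0 < p := by linarith
  have hbernoulli (j : J) : 1 + p * (s j - 1) + (if j = i then (p - 1) / 2 else 0) ≤ s j ^ p := by
    split_ifs with hj
    · subst hj
      rw [lt_div_iff₀ (by positivity)] at hi
      nlinarith [Real.rpow_nonneg (hs j) p]
    · simpa using one_add_mul_self_le_rpow_one_add (by linarith [hs j] : -1 ≤ s j - 1) hp.le
  have hle := Finset.sum_le_sum fun j (_ : j ∈ Finset.univ) => hbernoulli j
  rw [hsum, Finset.sum_add_distrib, Finset.sum_add_distrib, ← Finset.mul_sum,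
    Finset.sum_sub_distrib, Finset.sum_ite_eq' Finset.univ i] at hle
  simp only [Finset.sum_const, Finset.card_univ, nsmul_eq_mul, mul_one, Finset.mem_univ,
    if_true] at hle
  rw [le_sub_iff_add_le, ← le_sub_iff_add_le', div_le_iff₀ (by positivity)]
  linarith

theorem BeckConvex.exists_norm_sum_le_of_sum_rpow_eq_card (h : BeckConvex J E ρ) (hp : 1 < p)
    {x : J → E} (hx : ∑ j, ‖x j‖ ^ p = Fintype.card J) :
    ∃ ε : J → Bool, ‖∑ j, sgn (ε j) • x j‖ ≤
      Fintype.card J - (p - 1) / (2 * p) * min 1 (Fintype.card J - ρ) := by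
  have hθ : 0 ≤ (p - 1) / (2 * p) := div_nonneg (by linarith) (by linarith)
  have hnorm (j : J) : 0 ≤ ‖x j‖ := norm_nonneg _
  rcases le_or_sum_le_of_sum_rpow_eq_card hp hnorm hx with hlarge | hsum
  · obtain ⟨ε, hε⟩ := h.exists_norm_sum_le_sum_norm_sub hθ hlarge
    refine ⟨ε, hε.trans ?_⟩
    rw [mul_comm (_ / _)]
    gcongr
    · exact sum_le_card_of_sum_rpow_eq_card hp hnorm hx
    · exact min_le_right _ _
  · refine ⟨fun _ => true, (norm_sum_sgn_smul_le _ _).trans (hsum.trans ?_)⟩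
    gcongr
    exact mul_le_of_le_one_right hθ (min_le_left _ _)

theorem BeckConvex.exists_norm_sum_le_mul_rpow [Nonempty J] (h : BeckConvex J E ρ) (hp : 1 < p)
    (x : J → E) :
    ∃ ε : J → Bool, ‖∑ j, sgn (ε j) • x j‖ ≤
      (Fintype.card J - (p - 1) / (2 * p) * min 1 (Fintype.card J - ρ)) *
        ((∑ j, ‖x j‖ ^ p) / Fintype.card J) ^ p⁻¹ := by
  have hp0 : p ≠ 0 := by linarith
  have hcard : (0 : ℝ) < Fintype.card J := mod_cast Fintype.card_pos
  have : 0 ≤ ∑ j, ‖x j‖ ^ p := by positivity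
  set c := ((∑ j, ‖x j‖ ^ p) / Fintype.card J) ^ p⁻¹ with hc
  have hcp : c ^ p = (∑ j, ‖x j‖ ^ p) / Fintype.card J := by
    rw [hc, Real.rpow_inv_rpow (by positivity) hp0]
  obtain hc0 | hc0 := (show 0 ≤ c by positivity).eq_or_lt
  · rw [← hc0, Real.zero_rpow hp0, eq_comm, div_eq_zero_iff, or_iff_left hcard.ne',
      Finset.sum_eq_zero_iff_of_nonneg fun j _ => by positivity] at hcp
    have hx (j : J) : x j = 0 :=
      norm_eq_zero.1 ((Real.rpow_eq_zero (norm_nonneg _) hp0).1 (hcp j (Finset.mem_univ j)))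
    exact ⟨fun _ => true, by simp [hx, ← hc0]⟩
  obtain ⟨ε, hε⟩ := h.exists_norm_sum_le_of_sum_rpow_eq_card hp (x := fun j => c⁻¹ • x j) <| by
    simp_rw [norm_smul, norm_inv, Real.norm_of_nonneg hc0.le,
      Real.mul_rpow (inv_nonneg.2 hc0.le) (norm_nonneg _), ← Finset.mul_sum,
      Real.inv_rpow hc0.le]
    rw [inv_mul_eq_iff_eq_mul₀ (by positivity), hcp, div_mul_cancel₀ _ hcard.ne']
  refine ⟨ε, ?_⟩
  simp_rw [smul_comm _ c⁻¹, ← Finset.smul_sum] at hε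
  rwa [norm_smul, norm_inv, Real.norm_of_nonneg hc0.le, inv_mul_le_iff₀ hc0, mul_comm] at hε

theorem norm_sum_sgn_smul_rpow_le (hp : 1 ≤ p) [Nonempty J] (ε : J → Bool) (x : J → E) :
    ‖∑ j, sgn (ε j) • x j‖ ^ p ≤
      (Fintype.card J : ℝ) ^ p * ((∑ j, ‖x j‖ ^ p) / Fintype.card J) := by
  have hcard : (0 : ℝ) < Fintype.card J := mod_cast Fintype.card_pos
  calc ‖∑ j, sgn (ε j) • x j‖ ^ p ≤ (∑ j, ‖x j‖) ^ p := by
        gcongr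
        exact norm_sum_sgn_smul_le ε x
    _ ≤ (Fintype.card J : ℝ) ^ (p - 1) * ∑ j, ‖x j‖ ^ p :=
        Real.rpow_sum_le_const_mul_sum_rpow_of_nonneg _ hp fun j _ => norm_nonneg _
    _ = _ := by
        rw [Real.rpow_sub_one hcard.ne']
        ring

theorem sum_norm_rpow_le_of_exists_norm_sum_le [Nonempty J] [DecidableEq J] (hp : 1 ≤ p) {θ : ℝ}
    (hθ : θ ≤ Fintype.card J) {x : J → E}
    (hx : ∃ ε : J → Bool, ‖∑ j, sgn (ε j) • x j‖ ≤
      (Fintype.card J - θ) * ((∑ j, ‖x j‖ ^ p) / Fintype.card J) ^ p⁻¹) :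
    ∑ ε : J → Bool, ‖∑ j, sgn (ε j) • x j‖ ^ p ≤
      ((Fintype.card (J → Bool) - 1) * (Fintype.card J : ℝ) ^ p + (Fintype.card J - θ) ^ p) *
        ((∑ j, ‖x j‖ ^ p) / Fintype.card J) := by
  obtain ⟨ε₀, hε₀⟩ := hx
  set b := (∑ j, ‖x j‖ ^ p) / Fintype.card J
  have hb : 0 ≤ b := by positivity
  have hgood : ‖∑ j, sgn (ε₀ j) • x j‖ ^ p ≤ (Fintype.card J - θ) ^ p * b := by
    rw [← Real.rpow_inv_rpow hb (by linarith : p ≠ 0),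
      ← Real.mul_rpow (sub_nonneg.2 hθ) (by positivity)]
    gcongr
  have hothers : ∑ ε ∈ Finset.univ.erase ε₀, ‖∑ j, sgn (ε j) • x j‖ ^ p ≤
      (Fintype.card (J → Bool) - 1) * ((Fintype.card J : ℝ) ^ p * b) := by
    refine (Finset.sum_le_card_nsmul _ _ _ fun ε _ =>
      norm_sum_sgn_smul_rpow_le hp ε x).trans_eq ?_
    rw [Finset.card_erase_of_mem (Finset.mem_univ _), Finset.card_univ, nsmul_eq_mul,
      Nat.cast_pred Fintype.card_pos]
  rw [← Finset.add_sum_erase _ _ (Finset.mem_univ ε₀)]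
  linarith

theorem BeckConvex.exists_sum_norm_rpow_le [Nonempty J] [DecidableEq J] (h : BeckConvex J E ρ)
    (hρ : ρ < Fintype.card J) (hp : 1 < p) :
    ∃ r : ℝ, 0 ≤ r ∧ r < (Fintype.card J : ℝ) ^ p ∧ ∀ x : J → E,
      ∑ ε : J → Bool, ‖∑ j, sgn (ε j) • x j‖ ^ p ≤
        Fintype.card (J → Bool) * (r * ((∑ j, ‖x j‖ ^ p) / Fintype.card J)) := by
  have hcard : (1 : ℝ) ≤ Fintype.card J := mod_cast Fintype.card_pos
  let n : ℝ := Fintype.card J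
  let N : ℝ := Fintype.card (J → Bool)
  have hN : 1 ≤ N := Nat.one_le_cast.2 Fintype.card_pos
  let θ : ℝ := (p - 1) / (2 * p) * min 1 (n - ρ)
  have hθ0 : 0 < θ :=
    mul_pos (div_pos (by linarith) (by linarith)) (lt_min one_pos (sub_pos.2 hρ))
  have hθ1 : θ ≤ 1 :=
    mul_le_one₀ ((div_le_one (by linarith)).2 (by linarith))
      (le_min zero_le_one (sub_pos.2 hρ).le) (min_le_left _ _)
  have hnθ : 0 ≤ n - θ := by linarith
  have hlt : (n - θ) ^ p < n ^ p := Real.rpow_lt_rpow hnθ (by linarith) (by linarith)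
  refine ⟨((N - 1) * n ^ p + (n - θ) ^ p) / N, ?_, ?_, fun x => ?_⟩
  · have := sub_nonneg.2 hN
    positivity
  · rw [div_lt_iff₀ (by linarith)]
    linarith
  · refine (sum_norm_rpow_le_of_exists_norm_sum_le hp.le (hθ1.trans hcard)
      (h.exists_norm_sum_le_mul_rpow hp x)).trans_eq ?_
    rw [← mul_assoc, mul_div_cancel₀ _ (by linarith)]

/-- The averaged form of the condition integrates over `Ω`, which makes the constant independent
of `Ω`. -/
theorem BeckConvex.exists_piLp [Nonempty J] (h : BeckConvex J E ρ) (hρ : ρ < Fintype.card J)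
    (P : ℝ≥0∞) [Fact (1 ≤ P)] (hP1 : 1 < P) (hP : P ≠ ⊤) :
    ∃ ρ' : ℝ, ρ' < Fintype.card J ∧
      ∀ (Ω : Type) [Fintype Ω], BeckConvex J (PiLp P fun _ : Ω => E) ρ' := by
  classical
  have hp : 1 < P.toReal := (ENNReal.toReal_lt_toReal ENNReal.one_ne_top hP).2 hP1
  set p := P.toReal
  have hp0 : 0 < p := by linarith
  have hcard : (0 : ℝ) < Fintype.card J := mod_cast Fintype.card_pos
  obtain ⟨r, hr0, hr, hsum⟩ := h.exists_sum_norm_rpow_le hρ hp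
  refine ⟨r ^ p⁻¹, (Real.rpow_inv_lt_iff_of_pos hr0 hcard.le hp0).2 hr, fun Ω _ x hx => ?_⟩
  have hnorm (v : PiLp P fun _ : Ω => E) : ‖v‖ ^ p = ∑ ω, ‖v ω‖ ^ p := by
    rw [PiLp.norm_eq_sum hp0, one_div, Real.rpow_inv_rpow (by positivity) hp0.ne']
  have hmean : (∑ j, ‖x j‖ ^ p) / Fintype.card J ≤ 1 := by
    rw [div_le_one hcard, ← nsmul_one (Fintype.card J), ← Finset.card_univ]
    exact Finset.sum_le_card_nsmul _ _ _ fun j _ =>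
      Real.rpow_le_one (norm_nonneg _) (hx j) hp0.le
  have htotal : ∑ ε : J → Bool, ‖∑ j, sgn (ε j) • x j‖ ^ p ≤ ∑ _ε : J → Bool, r := by
    calc ∑ ε : J → Bool, ‖∑ j, sgn (ε j) • x j‖ ^ p
        = ∑ ω, ∑ ε : J → Bool, ‖∑ j, sgn (ε j) • x j ω‖ ^ p := by
          simp_rw [hnorm]
          rw [Finset.sum_comm]
          simp
      _ ≤ ∑ ω, Fintype.card (J → Bool) * (r * ((∑ j, ‖x j ω‖ ^ p) / Fintype.card J)) :=
          Finset.sum_le_sum fun ω _ => hsum fun j => x j ω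
      _ = Fintype.card (J → Bool) * (r * ((∑ j, ‖x j‖ ^ p) / Fintype.card J)) := by
          simp_rw [hnorm, ← Finset.mul_sum, ← Finset.sum_div]
          rw [Finset.sum_comm]
      _ ≤ Fintype.card (J → Bool) * (r * 1) := by gcongr
      _ = ∑ _ε : J → Bool, r := by
          rw [Finset.sum_const, Finset.card_univ, nsmul_eq_mul, mul_one]
  obtain ⟨ε, -, hε⟩ := Finset.exists_le_of_sum_le Finset.univ_nonempty htotal
  exact ⟨ε, (Real.le_rpow_inv_iff_of_pos (norm_nonneg _) hr0 hp0).2 hε⟩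

end Beck

/-! ### Pisier's lower bound for averages of commuting contractive projections -/

section Pisier

variable {J E : Type*} [Fintype J] [Nonempty J] [NormedAddCommGroup E] [NormedSpace ℂ E] {ρ : ℝ}

theorem norm_map_prod_le_one {ι R : Type*} [CommRing R] (Φ : R →+* (E →L[ℂ] E)) {q : ι → R}
    (hq : ∀ i, ‖Φ (q i)‖ ≤ 1) (B : Finset ι) : ‖Φ (∏ i ∈ B, q i)‖ ≤ 1 := by
  classical
  induction B using Finset.induction_on with
  | empty =>
    rw [Finset.prod_empty, map_one]
    exact ContinuousLinearMap.norm_id_le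
  | insert i B hi ih =>
    rw [Finset.prod_insert hi, map_mul]
    exact (norm_mul_le _ _).trans (mul_le_one₀ (hq i) (norm_nonneg _) ih)

theorem map_prod_neg_insert_apply {ι R : Type*} [DecidableEq ι] [CommRing R]
    (Φ : R →+* (E →L[ℂ] E)) {q : ι → R} (hq : ∀ i, IsIdempotentElem (q i)) (B : Finset ι) (i : ι)
    (v : E) :
    Φ (∏ k ∈ insert i B, -q k) v =
      Φ (∏ k ∈ B, -q k) (sgn (decide (i ∈ B)) • Φ (q i) v) := by
  by_cases hi : i ∈ B
  · have habsorb : (∏ k ∈ B, -q k) * q i = ∏ k ∈ B, -q k := by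
      rw [← Finset.mul_prod_erase B _ hi, mul_right_comm, neg_mul, (hq i).eq]
    simp [hi, sgn, ← mul_apply_eq_comp, ← map_mul, habsorb]
  · simp [hi, sgn, Finset.prod_insert hi, ← mul_apply_eq_comp, ← map_mul, mul_comm]

theorem norm_map_prod_one_sub_sub_le {ι R : Type*} [Fintype ι] [CommRing R]
    (Φ : R →+* (E →L[ℂ] E)) {q : ι → R} (hq : ∀ i, ‖Φ (q i)‖ ≤ 1) (B : Finset ι) :
    ‖Φ (∏ i, (1 - q i)) - Φ (∏ i ∈ B, -q i)‖ ≤ 2 ^ Fintype.card ι - 1 := by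
  classical
  have hexpand : Φ (∏ i, (1 - q i)) - Φ (∏ i ∈ B, -q i) =
      ∑ B' ∈ Finset.univ.erase B, Φ (∏ i ∈ B', -q i) := by
    rw [Finset.sum_erase_eq_sub (Finset.mem_univ B)]
    simp [sub_eq_add_neg, Finset.prod_one_add]
  rw [hexpand]
  refine (norm_sum_le_of_le _ fun B' _ =>
    norm_map_prod_le_one Φ (fun i => by simpa using hq i) B').trans_eq ?_
  rw [Finset.sum_const, Finset.card_erase_of_mem (Finset.mem_univ _), Finset.card_univ,
    Fintype.card_finset, nsmul_eq_mul, mul_one, Nat.cast_pred (by positivity), Nat.cast_pow,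
    Nat.cast_ofNat]

/-- For every `j`, expanding the product produces the term `∏ k ∈ insert j B, -q k`. Averaging over
`j` replaces one of the `2 ^ n` terms by a signed mean of the vectors `q j v`; here the signs,
encoded by `B`, can be chosen freely. -/
theorem BeckConvex.norm_map_prod_one_sub_le {R : Type*} [CommRing R] (h : BeckConvex J E ρ)
    (Φ : R →+* (E →L[ℂ] E)) {q : J → R} (hidem : ∀ j, IsIdempotentElem (q j))
    (hnorm : ∀ j, ‖Φ (q j)‖ ≤ 1) :
    ‖Φ (∏ j, (1 - q j))‖ ≤ 2 ^ Fintype.card J - 1 + ρ / Fintype.card J := by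
  classical
  have hcard : (0 : ℝ) < Fintype.card J := mod_cast Fintype.card_pos
  have hpow : (0 : ℝ) ≤ 2 ^ Fintype.card J - 1 := sub_nonneg.2 (one_le_pow₀ one_le_two)
  have hρ := h.nonneg
  refine ContinuousLinearMap.opNorm_le_bound _ (by positivity) fun v => ?_
  let t (B : Finset J) : E →L[ℂ] E := Φ (∏ k ∈ B, -q k)
  obtain ⟨ε, hε⟩ := h.exists_norm_sum_le_mul (norm_nonneg v) (x := fun j => Φ (q j) v)
    fun j => (Φ (q j)).le_of_opNorm_le (hnorm j) v |>.trans_eq (one_mul _)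
  let B : Finset J := {j | ε j = true}
  have hB : ‖∑ j, t (insert j B) v‖ ≤ ρ * ‖v‖ := by
    have hsum : ∑ j, t (insert j B) v = t B (∑ j, sgn (ε j) • Φ (q j) v) := by
      simp [t, map_prod_neg_insert_apply Φ hidem, B]
    have ht : ‖t B‖ ≤ 1 := norm_map_prod_le_one Φ (by simpa using hnorm) B
    rw [hsum]
    exact ((t B).le_of_opNorm_le ht _).trans ((one_mul _).trans_le hε)
  have hmean : (Fintype.card J : ℝ) • Φ (∏ j, (1 - q j)) v =
      ∑ j, t (insert j B) v + ∑ j, (Φ (∏ j, (1 - q j)) - t (insert j B)) v := by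
    simp [← Nat.cast_smul_eq_nsmul ℝ]
  refine le_of_mul_le_mul_left ?_ hcard
  calc Fintype.card J * ‖Φ (∏ j, (1 - q j)) v‖
      = ‖(Fintype.card J : ℝ) • Φ (∏ j, (1 - q j)) v‖ := by
        rw [norm_smul, Real.norm_of_nonneg hcard.le]
    _ ≤ ρ * ‖v‖ + ∑ _j : J, (2 ^ Fintype.card J - 1) * ‖v‖ := by
        rw [hmean]
        exact norm_add_le_of_le hB (norm_sum_le_of_le _ fun j _ =>
          ContinuousLinearMap.le_of_opNorm_le _ (norm_map_prod_one_sub_sub_le Φ hnorm _) v)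
    _ = Fintype.card J * ((2 ^ Fintype.card J - 1 + ρ / Fintype.card J) * ‖v‖) := by
        rw [Finset.sum_const, Finset.card_univ, nsmul_eq_mul]
        field_simp
        ring

section ConvexCombination

variable {R S : Type*} [CommRing R] [Algebra ℂ R] [Fintype S] {w : S → ℝ}

theorem norm_map_sum_smul_le {V 𝒜 : Type*} [AddCommMonoid V] [Module ℂ V]
    [SeminormedAddCommGroup 𝒜] [NormedSpace ℂ 𝒜] (Φ : V →ₗ[ℂ] 𝒜) (hw : ∀ s, 0 ≤ w s)
    (hsum : ∑ s, w s = 1) {a : S → V} {C : ℝ} (ha : ∀ s, ‖Φ (a s)‖ ≤ C) :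
    ‖Φ (∑ s, (w s : ℂ) • a s)‖ ≤ C := by
  rw [map_sum]
  refine (norm_sum_le_of_le _ fun s _ => ?_).trans_eq (b := ∑ s, w s * C) ?_
  · rw [map_smul, norm_smul, Complex.norm_real, Real.norm_of_nonneg (hw s)]
    exact mul_le_mul_of_nonneg_left (ha s) (hw s)
  · rw [← Finset.sum_mul, hsum, one_mul]

theorem BeckConvex.norm_map_one_sub_pow_le (h : BeckConvex J E ρ) (Φ : R →ₐ[ℂ] (E →L[ℂ] E))
    (hw : ∀ s, 0 ≤ w s) (hsum : ∑ s, w s = 1) {q : S → R} (hidem : ∀ s, IsIdempotentElem (q s))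
    (hnorm : ∀ s, ‖Φ (q s)‖ ≤ 1) :
    ‖Φ ((1 - ∑ s, (w s : ℂ) • q s) ^ Fintype.card J)‖ ≤
      2 ^ Fintype.card J - 1 + ρ / Fintype.card J := by
  classical
  have hpow : (1 - ∑ s, (w s : ℂ) • q s) ^ Fintype.card J =
      ∑ g : J → S, ((∏ j, w (g j) : ℝ) : ℂ) • ∏ j, (1 - q (g j)) := by
    have hone : (1 : R) = ∑ s, (w s : ℂ) • (1 : R) := by
      rw [← Finset.sum_smul, ← Complex.ofReal_sum, hsum, Complex.ofReal_one, one_smul]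
    nth_rewrite 1 [hone]
    simp_rw [← Finset.sum_sub_distrib, ← smul_sub]
    rw [← Finset.card_univ, ← Finset.prod_const, Fintype.prod_sum]
    simp_rw [Complex.ofReal_prod, Finset.prod_smul]
  rw [hpow]
  refine norm_map_sum_smul_le Φ.toLinearMap (fun g => Finset.prod_nonneg fun j _ => hw (g j)) ?_
    fun g => h.norm_map_prod_one_sub_le Φ.toRingHom (fun j => hidem (g j)) fun j => hnorm (g j)
  rw [← Fintype.prod_sum fun (_ : J) s => w s, hsum, Finset.prod_const_one]

end ConvexCombination

/-- If a contraction `s` has a power of norm at most `1 - η`, then `1 - s` is bounded below: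
`a = sⁿ a + ∑_{j<n} sʲ (1 - s) a`. -/
theorem mul_norm_le_of_norm_pow_le {𝒜 : Type*} [NormedRing 𝒜] {s : 𝒜} (hs : ‖s‖ ≤ 1) {n : ℕ}
    {η : ℝ} (hpow : ‖s ^ n‖ ≤ 1 - η) (a : 𝒜) : η * ‖a‖ ≤ n * ‖(1 - s) * a‖ := by
  have hterm (j : ℕ) : ‖s ^ j * ((1 - s) * a)‖ ≤ ‖(1 - s) * a‖ := by
    induction j with
    | zero => simp
    | succ j ih =>
      rw [pow_succ', mul_assoc]
      exact (norm_mul_le _ _).trans ((mul_le_of_le_one_left (norm_nonneg _) hs).trans ih)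
  have hsplit : a = s ^ n * a + ∑ j ∈ Finset.range n, s ^ j * ((1 - s) * a) := by
    rw [← Finset.sum_mul, ← mul_assoc, geom_sum_mul_neg]
    noncomm_ring
  have hle : ‖a‖ ≤ (1 - η) * ‖a‖ + n * ‖(1 - s) * a‖ := by
    nth_rewrite 1 [hsplit]
    refine norm_add_le_of_le ((norm_mul_le _ _).trans (by gcongr)) ?_
    simpa using norm_sum_le_of_le (Finset.range n) fun j _ => hterm j
  linarith

theorem BeckConvex.mul_norm_le_norm_one_add_mul {R S : Type*} [CommRing R] [Algebra ℂ R]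
    [Fintype S] {w : S → ℝ} (h : BeckConvex J E ρ) (Φ : R →ₐ[ℂ] (E →L[ℂ] E))
    (hw : ∀ s, 0 ≤ w s) (hsum : ∑ s, w s = 1) {q : S → R} (hidem : ∀ s, IsIdempotentElem (q s))
    (hnorm : ∀ s, ‖Φ (q s)‖ ≤ 1) (a : E →L[ℂ] E) :
    2 * (1 - ρ / Fintype.card J) / (Fintype.card J * 2 ^ Fintype.card J) * ‖a‖ ≤
      ‖(1 + Φ (∑ s, (w s : ℂ) • q s)) * a‖ := by
  set T := ∑ s, (w s : ℂ) • q s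
  set n := Fintype.card J
  have hn : (0 : ℝ) < n := mod_cast Fintype.card_pos
  let U : E →L[ℂ] E := (2⁻¹ : ℂ) • (1 - Φ T)
  have hhalf : ‖(2⁻¹ : ℂ)‖ = 2⁻¹ := by simp
  have hU : ‖U‖ ≤ 1 := by
    have hTnorm : ‖Φ T‖ ≤ 1 := norm_map_sum_smul_le Φ.toLinearMap hw hsum hnorm
    have hsub : ‖1 - Φ T‖ ≤ 1 + 1 :=
      (norm_sub_le _ _).trans (add_le_add ContinuousLinearMap.norm_id_le hTnorm)
    rw [norm_smul, hhalf]
    linarith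
  have hUpow : ‖U ^ n‖ ≤ 1 - (1 - ρ / n) / 2 ^ n := by
    have hU_eq : U ^ n = (2⁻¹ : ℂ) ^ n • Φ ((1 - T) ^ n) := by
      rw [smul_pow, map_pow, map_sub, map_one]
    rw [hU_eq, norm_smul, norm_pow, hhalf, inv_pow, inv_mul_le_iff₀ (by positivity)]
    refine (h.norm_map_one_sub_pow_le Φ hw hsum hidem hnorm).trans_eq ?_
    field_simp
    ring
  have hU_compl : 1 - U = (2⁻¹ : ℂ) • (1 + Φ T) := by
    simp only [U]
    module
  have hlower := mul_norm_le_of_norm_pow_le hU hUpow a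
  rw [hU_compl, smul_mul_assoc, norm_smul, hhalf] at hlower
  calc 2 * (1 - ρ / n) / (n * 2 ^ n) * ‖a‖
      = 2 / n * ((1 - ρ / n) / 2 ^ n * ‖a‖) := by
        field_simp
    _ ≤ 2 / n * (n * (2⁻¹ * ‖(1 + Φ T) * a‖)) := by gcongr
    _ = ‖(1 + Φ T) * a‖ := by
        field_simp

end Pisier

/-! ### Laplace inversion for `s² e^{-cs}` -/

section Laplace

open MeasureTheory Filter Topology

theorem integrableOn_sq_mul_cexp {c : ℂ} (hc : 0 < c.re) :
    IntegrableOn (fun s : ℝ => (s : ℂ) ^ 2 * Complex.exp (-(c * s))) (Set.Ioi 0) := by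
  have hreal : IntegrableOn (fun s : ℝ => s ^ 2 * Real.exp (-(c.re * s))) (Set.Ioi 0) := by
    refine (integrableOn_rpow_mul_exp_neg_mul_rpow (s := 2) (p := 1) (by norm_num) one_pos
      hc).congr_fun (fun s _ => ?_) measurableSet_Ioi
    simp
  refine hreal.mono' (by fun_prop : Continuous _).aestronglyMeasurable (.of_forall fun s => ?_)
  simp [Complex.norm_exp]

theorem tendsto_pow_mul_cexp_neg_mul_atTop_nhds_zero {c : ℂ} (hc : 0 < c.re) (n : ℕ) :
    Tendsto (fun s : ℝ => (s : ℂ) ^ n * Complex.exp (-(c * s))) atTop (𝓝 0) := by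
  rw [tendsto_zero_iff_norm_tendsto_zero]
  refine (tendsto_rpow_mul_exp_neg_mul_atTop_nhds_zero (n : ℝ) c.re hc).congr' ?_
  filter_upwards [eventually_ge_atTop 0] with s hs
  simp [Complex.norm_exp, abs_of_nonneg hs]

theorem integral_sq_mul_cexp_Ioi {c : ℂ} (hc : 0 < c.re) :
    ∫ s : ℝ in Set.Ioi 0, (s : ℂ) ^ 2 * Complex.exp (-(c * s)) = 2 / c ^ 3 := by
  have hc0 : c ≠ 0 := by rintro rfl; simp at hc
  set F : ℝ → ℂ := fun s => -(1 / c * ((s : ℂ) ^ 2 * Complex.exp (-(c * s)))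
    + 2 / c ^ 2 * ((s : ℂ) ^ 1 * Complex.exp (-(c * s)))
    + 2 / c ^ 3 * ((s : ℂ) ^ 0 * Complex.exp (-(c * s)))) with hF
  have hderiv (s : ℝ) : HasDerivAt F ((s : ℂ) ^ 2 * Complex.exp (-(c * s))) s := by
    have hid : HasDerivAt (fun s : ℝ => (s : ℂ)) 1 s := Complex.ofRealCLM.hasDerivAt
    have hexp := (hid.const_mul c).fun_neg.cexp
    refine (((((hid.fun_pow 2).fun_mul hexp).const_mul (1 / c)).fun_add
      (((hid.fun_pow 1).fun_mul hexp).const_mul (2 / c ^ 2))).fun_add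
      (((hid.fun_pow 0).fun_mul hexp).const_mul (2 / c ^ 3))).fun_neg.congr_deriv ?_
    simp only [one_div, Nat.cast_ofNat, Nat.add_one_sub_one, pow_one, mul_one, mul_neg,
      Nat.cast_one, tsub_self, pow_zero, one_mul, CharP.cast_eq_zero, zero_tsub, zero_mul, zero_add,
      neg_add_rev, neg_neg]
    field_simp
    ring
  have hlim : Tendsto F atTop (𝓝 0) := by
    have hpow := tendsto_pow_mul_cexp_neg_mul_atTop_nhds_zero hc
    simpa [hF] using ((((hpow 2).const_mul (1 / c)).add ((hpow 1).const_mul (2 / c ^ 2))).add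
      ((hpow 0).const_mul (2 / c ^ 3))).neg
  rw [integral_Ioi_of_hasDerivAt_of_tendsto' (fun s _ => hderiv s) (integrableOn_sq_mul_cexp hc)
    hlim]
  simp [hF]

/-- The point `b + 2πiξ` of the vertical line `Re = b`, parametrised by the Fourier variable `ξ`. -/
def verticalLine (b ξ : ℝ) : ℂ := b + (2 * Real.pi * ξ : ℝ) * Complex.I

@[simp]
theorem verticalLine_re (b ξ : ℝ) : (verticalLine b ξ).re = b := by simp [verticalLine]

theorem verticalLine_ne_zero {b : ℝ} (hb : 0 < b) (ξ : ℝ) : verticalLine b ξ ≠ 0 := fun h =>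
  hb.ne' (by simpa using congrArg Complex.re h)

theorem continuous_verticalLine (b : ℝ) : Continuous (verticalLine b) := by
  unfold verticalLine
  fun_prop

theorem inv_norm_verticalLine_sq {b : ℝ} (hb : 0 < b) (ξ : ℝ) :
    (‖verticalLine b ξ‖ ^ 2)⁻¹ = (b ^ 2)⁻¹ * (1 + (2 * Real.pi / b * ξ) ^ 2)⁻¹ := by
  rw [← Complex.normSq_eq_norm_sq, Complex.normSq_apply, ← mul_inv]
  congr 1
  simp only [verticalLine, Complex.add_re, Complex.add_im, Complex.re_ofReal_mul,
    Complex.im_ofReal_mul, Complex.ofReal_re, Complex.ofReal_im, Complex.I_re, Complex.I_im,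
    mul_zero, mul_one, add_zero, zero_add]
  field_simp

theorem integrable_inv_norm_verticalLine_sq {b : ℝ} (hb : 0 < b) :
    Integrable fun ξ => (‖verticalLine b ξ‖ ^ 2)⁻¹ := by
  simp_rw [inv_norm_verticalLine_sq hb]
  exact (integrable_inv_one_add_sq.comp_mul_left' (by positivity)).const_mul _

theorem integral_inv_norm_verticalLine_sq {b : ℝ} (hb : 0 < b) :
    ∫ ξ, (‖verticalLine b ξ‖ ^ 2)⁻¹ = (2 * b)⁻¹ := by
  simp_rw [inv_norm_verticalLine_sq hb]
  rw [integral_const_mul, Measure.integral_comp_mul_left (fun x : ℝ => (1 + x ^ 2)⁻¹),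
    integral_univ_inv_one_add_sq, abs_of_pos (by positivity), smul_eq_mul]
  field_simp

theorem integrable_two_div_verticalLine_cube {b : ℝ} (hb : 0 < b) :
    Integrable fun ξ => 2 / verticalLine b ξ ^ 3 := by
  have hcont : Continuous fun ξ => 2 / verticalLine b ξ ^ 3 :=
    continuous_const.div ((continuous_verticalLine b).pow 3) fun ξ =>
      pow_ne_zero 3 (verticalLine_ne_zero hb ξ)
  refine ((integrable_inv_norm_verticalLine_sq hb).const_mul (2 / b)).mono'
    hcont.aestronglyMeasurable (.of_forall fun ξ => ?_)
  have hle : b ≤ ‖verticalLine b ξ‖ := by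
    simpa [abs_of_pos hb] using Complex.abs_re_le_norm (verticalLine b ξ)
  have hpos : 0 < ‖verticalLine b ξ‖ := hb.trans_le hle
  calc ‖2 / verticalLine b ξ ^ 3‖ = 2 / ‖verticalLine b ξ‖ * (‖verticalLine b ξ‖ ^ 2)⁻¹ := by
        rw [norm_div, norm_pow, Complex.norm_two]
        field_simp
    _ ≤ 2 / b * (‖verticalLine b ξ‖ ^ 2)⁻¹ := by gcongr

theorem fourier_indicator_sq_mul_cexp {b : ℝ} (hb : 0 < b) :
    FourierTransform.fourier
      (Set.indicator (Set.Ioi 0) fun s : ℝ => (s : ℂ) ^ 2 * Complex.exp (-(b * s))) =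
      fun ξ : ℝ => 2 / verticalLine b ξ ^ 3 := by
  funext ξ
  rw [Real.fourier_real_eq_integral_exp_smul,
    ← integral_sq_mul_cexp_Ioi ((verticalLine_re b ξ).symm ▸ hb),
    ← integral_indicator measurableSet_Ioi]
  congr 1
  funext s
  by_cases hs : s ∈ Set.Ioi (0 : ℝ)
  · rw [Set.indicator_of_mem hs, Set.indicator_of_mem hs, smul_eq_mul, mul_left_comm,
      ← Complex.exp_add]
    congr 2
    simp only [verticalLine]
    push_cast
    ring
  · rw [Set.indicator_of_notMem hs, Set.indicator_of_notMem hs, smul_zero]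

theorem integral_cexp_mul_two_div_verticalLine_cube {b t : ℝ} (hb : 0 < b) (ht : 0 < t) :
    ∫ ξ : ℝ, Complex.exp ((2 * Real.pi * ξ * t : ℝ) * Complex.I) * (2 / verticalLine b ξ ^ 3) =
      (t : ℂ) ^ 2 * Complex.exp (-(b * t)) := by
  set g : ℝ → ℂ :=
    Set.indicator (Set.Ioi 0) fun s : ℝ => (s : ℂ) ^ 2 * Complex.exp (-(b * s)) with hg
  have hint : Integrable g := by
    rw [hg, integrable_indicator_iff measurableSet_Ioi]
    exact integrableOn_sq_mul_cexp (by simpa using hb)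
  have hint' : Integrable (FourierTransform.fourier g) := by
    rw [fourier_indicator_sq_mul_cexp hb]
    exact integrable_two_div_verticalLine_cube hb
  have hcont : ContinuousAt g t := by
    have : ContinuousAt (fun s : ℝ => (s : ℂ) ^ 2 * Complex.exp (-(b * s))) t := by fun_prop
    refine this.congr ?_
    filter_upwards [Ioi_mem_nhds ht] with s hs
    rw [hg, Set.indicator_of_mem hs]
  have hinv := hint.fourierInv_fourier_eq hint' hcont
  rw [Real.fourierInv_eq', fourier_indicator_sq_mul_cexp hb, hg,
    Set.indicator_of_mem (Set.mem_Ioi.2 ht)] at hinv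
  rw [← hinv]
  congr 1
  funext ξ
  rw [smul_eq_mul]
  congr 4
  simp only [RCLike.inner_apply, Real.ringHom_apply]
  ring

theorem integrable_cexp_mul_two_div_verticalLine_cube {b : ℝ} (hb : 0 < b) (t : ℝ) :
    Integrable fun ξ : ℝ =>
      Complex.exp ((2 * Real.pi * ξ * t : ℝ) * Complex.I) * (2 / verticalLine b ξ ^ 3) := by
  refine (integrable_two_div_verticalLine_cube hb).bdd_mul (c := 1)
    (by fun_prop : Continuous _).aestronglyMeasurable (.of_forall fun ξ => ?_)
  rw [Complex.norm_exp_ofReal_mul_I]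

theorem norm_map_integral_le {α V F : Type*} [MeasurableSpace α] {ν : Measure α}
    [NormedAddCommGroup V] [NormedSpace ℂ V] [CompleteSpace V] [NormedAddCommGroup F]
    [NormedSpace ℂ F] (L : V →L[ℂ] F) {g : α → V} (hg : Integrable g ν) {B : α → ℝ}
    (hB : Integrable B ν) (hle : ∀ x, ‖L (g x)‖ ≤ B x) : ‖L (∫ x, g x ∂ν)‖ ≤ ∫ x, B x ∂ν := by
  -- `F` need not be complete, so the integral of `L ∘ g` is taken in its completion.
  have hcomm := (UniformSpace.Completion.toComplL.comp L).integral_comp_comm hg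
  calc ‖L (∫ x, g x ∂ν)‖ = ‖∫ x, (UniformSpace.Completion.toComplL.comp L) (g x) ∂ν‖ := by
        rw [hcomm]
        exact (UniformSpace.Completion.norm_coe _).symm
    _ ≤ ∫ x, B x ∂ν := norm_integral_le_of_norm_le hB (.of_forall fun x =>
        (UniformSpace.Completion.norm_coe _).trans_le (hle x))

end Laplace

/-! ### Contraction semigroups in a normed algebra -/

section Semigroup

open MeasureTheory

variable {ι 𝒜 : Type*} [NormedRing 𝒜] [NormedAlgebra ℂ 𝒜] {Φ : (ι → ℂ) →ₐ[ℂ] 𝒜} {k : ι → ℝ}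
  {δ M C t : ℝ} {μ z : ℂ}

/-- The symbol `e^{-zk}`. A homomorphism `Φ` from an algebra of symbols turns it into the semigroup
whose negative generator has symbol `k`. -/
def expSymbol (k : ι → ℝ) (z : ℂ) : ι → ℂ := fun i => Complex.exp (-z * k i)

/-- The symbol `(μ + k)⁻¹` of the resolvent of the semigroup `expSymbol k`. -/
def resolventSymbol (k : ι → ℝ) (μ : ℂ) : ι → ℂ := fun i => (μ + k i)⁻¹

theorem add_ofReal_ne_zero (hk : ∀ i, 0 ≤ k i) (hμ : 0 < μ.re) (i : ι) : μ + k i ≠ 0 := fun h => by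
  have hre : μ.re + k i = 0 := by simpa using congrArg Complex.re h
  linarith [hk i]

theorem norm_smul_map_expSymbol_mul_le (hT : ∀ t : ℝ, 0 ≤ t → ‖Φ (expSymbol k t)‖ ≤ 1) (c : ℂ)
    (ht : 0 ≤ t) (a : 𝒜) : ‖c • (Φ (expSymbol k t) * a)‖ ≤ ‖c‖ * ‖a‖ := by
  rw [norm_smul]
  gcongr
  exact (norm_mul_le _ _).trans (mul_le_of_le_one_left (norm_nonneg a) (hT t ht))

theorem norm_map_resolventSymbol_sq_sub_le
    (hR : ‖μ‖ * ‖Φ (resolventSymbol k μ)‖ ≤ M) (hμ : μ ≠ 0) :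
    ‖Φ (resolventSymbol k μ ^ 2 - μ • resolventSymbol k μ ^ 3)‖ ≤
      (1 + M) * M ^ 2 * (‖μ‖ ^ 2)⁻¹ := by
  have : 0 < ‖μ‖ := norm_pos_iff.2 hμ
  rw [map_sub, map_smul, map_pow, map_pow]
  set R := Φ (resolventSymbol k μ)
  calc ‖R ^ 2 - μ • R ^ 3‖ ≤ ‖R‖ ^ 2 + ‖μ‖ * ‖R‖ ^ 3 := by
        refine norm_sub_le_of_le (norm_pow_le' R two_pos) ?_
        rw [norm_smul]
        gcongr
        exact norm_pow_le' R three_pos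
    _ = (1 + ‖μ‖ * ‖R‖) * (‖μ‖ * ‖R‖) ^ 2 * (‖μ‖ ^ 2)⁻¹ := by field_simp
    _ ≤ (1 + M) * M ^ 2 * (‖μ‖ ^ 2)⁻¹ := by
        have hnonneg : 0 ≤ ‖μ‖ * ‖R‖ := by positivity
        have hM : 0 ≤ 1 + M := by linarith
        gcongr

theorem hasSum_expSymbol_add_mul_I (k : ι → ℝ) (t s : ℝ) :
    HasSum (fun j : ℕ => ((-(s * Complex.I)) ^ j / (j.factorial : ℂ)) •
      ((fun i => (k i : ℂ)) ^ j * expSymbol k t)) (expSymbol k (t + s * Complex.I)) := by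
  refine Pi.hasSum.2 fun i => ?_
  have hexp := (NormedSpace.expSeries_div_hasSum_exp (𝔸 := ℂ) (-(s * Complex.I) * k i)).mul_right
    (expSymbol k t i)
  have hsum : NormedSpace.exp (-(s * Complex.I) * k i) * expSymbol k t i =
      expSymbol k (t + s * Complex.I) i := by
    simp only [expSymbol, ← Complex.exp_eq_exp_ℂ, ← Complex.exp_add]
    ring_nf
  rw [hsum] at hexp
  refine hexp.congr_fun fun j => ?_
  simp only [Pi.smul_apply, Pi.mul_apply, Pi.pow_apply, smul_eq_mul, mul_pow]
  ring

theorem pow_mul_expSymbol (k : ι → ℝ) (t : ℝ) {j : ℕ} (hj : j ≠ 0) :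
    (fun i => (k i : ℂ)) ^ j * expSymbol k t =
      ((fun i => (k i : ℂ)) * expSymbol k (t / j : ℝ)) ^ j := by
  have hj' : (j : ℂ) ≠ 0 := Nat.cast_ne_zero.2 hj
  funext i
  simp only [Pi.mul_apply, Pi.pow_apply, expSymbol, mul_pow, ← Complex.exp_nat_mul]
  congr 2
  push_cast
  field_simp

/-- Inverting the Laplace transform of `s ↦ s² k e^{-sk}` along a vertical line writes
`t² k e^{-tk}` as an absolutely convergent integral of polynomials in the resolvent. -/
theorem integral_cexp_smul_resolventSymbol [Fintype ι] (hk : ∀ i, 0 ≤ k i) {a : ℝ} (ha : 0 < a)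
    (ht : 0 < t) :
    Integrable (fun ξ : ℝ => (2 * Complex.exp ((2 * Real.pi * ξ * t : ℝ) * Complex.I)) •
        (resolventSymbol k (verticalLine a ξ) ^ 2 -
          verticalLine a ξ • resolventSymbol k (verticalLine a ξ) ^ 3)) ∧
      ∫ ξ : ℝ, (2 * Complex.exp ((2 * Real.pi * ξ * t : ℝ) * Complex.I)) •
        (resolventSymbol k (verticalLine a ξ) ^ 2 -
          verticalLine a ξ • resolventSymbol k (verticalLine a ξ) ^ 3) =
        ((t : ℂ) ^ 2 * Complex.exp (-(a * t))) • ((fun i => (k i : ℂ)) * expSymbol k t) := by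
  have happly (i : ι) (ξ : ℝ) : ((2 * Complex.exp ((2 * Real.pi * ξ * t : ℝ) * Complex.I)) •
      (resolventSymbol k (verticalLine a ξ) ^ 2 -
        verticalLine a ξ • resolventSymbol k (verticalLine a ξ) ^ 3)) i =
      k i * (Complex.exp ((2 * Real.pi * ξ * t : ℝ) * Complex.I) *
        (2 / verticalLine (a + k i) ξ ^ 3)) := by
    have hne := add_ofReal_ne_zero hk ((verticalLine_re a ξ).symm ▸ ha) i
    have hadd : verticalLine (a + k i) ξ = verticalLine a ξ + k i := by
      simp only [verticalLine, Complex.ofReal_add]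
      ring
    simp only [Pi.smul_apply, Pi.sub_apply, Pi.pow_apply, resolventSymbol, smul_eq_mul, hadd]
    field_simp
    ring
  have hint (i : ι) := (integrable_cexp_mul_two_div_verticalLine_cube
    (add_pos_of_pos_of_nonneg ha (hk i)) t).const_mul (k i : ℂ)
  have hint' := Integrable.of_eval fun i => (hint i).congr (.of_forall fun ξ => (happly i ξ).symm)
  refine ⟨hint', funext fun i => ?_⟩
  rw [eval_integral fun i => hint'.eval i]
  simp_rw [happly]
  rw [integral_const_mul, integral_cexp_mul_two_div_verticalLine_cube
    (add_pos_of_pos_of_nonneg ha (hk i)) ht]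
  simp only [Pi.smul_apply, Pi.mul_apply, expSymbol, smul_eq_mul]
  rw [show -(((a + k i : ℝ) : ℂ) * t) = -(a * t) + -t * k i by push_cast; ring, Complex.exp_add]
  ring

variable [Finite ι]

theorem hasDerivAt_map_exp_smul_expSymbol_mul_resolventSymbol (Φ : (ι → ℂ) →ₐ[ℂ] 𝒜)
    (hk : ∀ i, 0 ≤ k i) (hμ : 0 < μ.re) (s : ℝ) :
    HasDerivAt (fun s : ℝ => Φ (Complex.exp (-μ * s) • (expSymbol k s * resolventSymbol k μ)))
      (-Φ (Complex.exp (-μ * s) • expSymbol k s)) s := by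
  have := Fintype.ofFinite ι
  have hsymbol : HasDerivAt
      (fun s : ℝ => Complex.exp (-μ * s) • (expSymbol k s * resolventSymbol k μ))
      (-(Complex.exp (-μ * s) • expSymbol k s)) s := by
    refine hasDerivAt_pi.2 fun i => ?_
    have hlin (c : ℂ) : HasDerivAt (fun s : ℝ => c * (s : ℂ)) c s := by
      simpa using (Complex.ofRealCLM.hasDerivAt (x := s)).const_mul c
    have hne := add_ofReal_ne_zero hk hμ i
    have hexp (s : ℝ) : Complex.exp (-(μ + k i) * s) =
        Complex.exp (-μ * s) * Complex.exp (-s * k i) := by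
      rw [← Complex.exp_add]
      ring_nf
    have hderiv := (hlin (-(μ + k i))).cexp.mul_const (resolventSymbol k μ i)
    simp only [hexp, mul_assoc] at hderiv
    refine hderiv.congr_deriv ?_
    simp only [Pi.neg_apply, Pi.smul_apply, expSymbol, resolventSymbol, smul_eq_mul]
    field_simp
  rw [← map_neg]
  exact (Φ.toLinearMap.toContinuousLinearMap.restrictScalars ℝ).hasFDerivAt.comp_hasDerivAt s
    hsymbol

theorem norm_map_resolventSymbol_sub_le (hk : ∀ i, 0 ≤ k i)
    (hT : ∀ t : ℝ, 0 ≤ t → ‖Φ (expSymbol k t)‖ ≤ 1) (hμ : 0 < μ.re) (ht : 0 ≤ t) :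
    ‖Φ (resolventSymbol k μ) -
      Complex.exp (-μ * t) • (Φ (expSymbol k t) * Φ (resolventSymbol k μ))‖ ≤ t := by
  have hderiv (s : ℝ) (hs : s ∈ Set.Ico 0 t) :
      ‖-Φ (Complex.exp (-μ * s) • expSymbol k s)‖ ≤ 1 := by
    have hexp : ‖Complex.exp (-μ * s)‖ ≤ 1 := by
      rw [Complex.norm_exp, Real.exp_le_one_iff, Complex.re_mul_ofReal, Complex.neg_re, neg_mul,
        neg_nonpos]
      exact mul_nonneg hμ.le hs.1
    rw [norm_neg, map_smul, norm_smul]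
    exact mul_le_one₀ hexp (norm_nonneg _) (hT s hs.1)
  have hmvt := norm_image_sub_le_of_norm_deriv_le_segment'
    (fun s _ => (hasDerivAt_map_exp_smul_expSymbol_mul_resolventSymbol Φ hk hμ s).hasDerivWithinAt)
    hderiv t (Set.right_mem_Icc.2 ht)
  have hzero : expSymbol k (0 : ℝ) = 1 := by
    funext i
    simp [expSymbol]
  rw [hzero, norm_sub_rev, map_smul, map_smul, map_mul, map_mul] at hmvt
  simpa using hmvt

theorem re_mul_norm_map_resolventSymbol_le (hk : ∀ i, 0 ≤ k i)
    (hT : ∀ t : ℝ, 0 ≤ t → ‖Φ (expSymbol k t)‖ ≤ 1) (hμ : 0 < μ.re) :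
    μ.re * ‖Φ (resolventSymbol k μ)‖ ≤ 2 := by
  set R := Φ (resolventSymbol k μ)
  have ht : 0 ≤ 1 / μ.re := by positivity
  have hexp : ‖Complex.exp (-μ * ((1 / μ.re : ℝ) : ℂ))‖ ≤ 1 / 2 := by
    rw [Complex.norm_exp, Complex.re_mul_ofReal, Complex.neg_re, neg_mul, mul_one_div_cancel hμ.ne',
      Real.exp_neg, ← one_div]
    exact one_div_le_one_div_of_le two_pos (by linarith [Real.add_one_le_exp 1])
  have hstep := norm_map_resolventSymbol_sub_le hk hT hμ ht
  have hsmul := norm_smul_map_expSymbol_mul_le hT (Complex.exp (-μ * ((1 / μ.re : ℝ) : ℂ))) ht R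
  have hhalf : ‖R‖ ≤ 1 / μ.re + 1 / 2 * ‖R‖ :=
    (norm_le_norm_sub_add _ _).trans (add_le_add hstep
      (hsmul.trans (mul_le_mul_of_nonneg_right hexp (norm_nonneg R))))
  calc μ.re * ‖R‖ ≤ μ.re * (2 * (1 / μ.re)) := by gcongr; linarith
    _ = 2 := by field_simp

theorem cexp_neg_mul_pi_div_abs_im (hμ : μ.im ≠ 0) :
    Complex.exp (-μ * ((Real.pi / |μ.im| : ℝ) : ℂ)) =
      -(Real.exp (-μ.re * (Real.pi / |μ.im|)) : ℂ) := by
  have hrot : Complex.exp (((-μ.im * (Real.pi / |μ.im|) : ℝ) : ℂ) * Complex.I) = -1 := by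
    rcases abs_cases μ.im with ⟨habs, _⟩ | ⟨habs, _⟩
    · rw [habs, show -μ.im * (Real.pi / μ.im) = -Real.pi by field_simp, Complex.ofReal_neg, neg_mul,
        Complex.exp_neg, Complex.exp_pi_mul_I, inv_neg, inv_one]
    · rw [habs, show -μ.im * (Real.pi / -μ.im) = Real.pi by field_simp, Complex.exp_pi_mul_I]
  have hsplit : -μ * ((Real.pi / |μ.im| : ℝ) : ℂ) = ((-μ.re * (Real.pi / |μ.im|) : ℝ) : ℂ) +
      ((-μ.im * (Real.pi / |μ.im|) : ℝ) : ℂ) * Complex.I := by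
    apply Complex.ext <;> simp
  rw [hsplit, Complex.exp_add, hrot, mul_neg_one, Complex.ofReal_exp]

/-- At time `π / |Im μ|` the factor `e^{-μt}` is negative, which is where `hL` applies. -/
theorem abs_im_mul_norm_map_resolventSymbol_le (hk : ∀ i, 0 ≤ k i)
    (hT : ∀ t : ℝ, 0 ≤ t → ‖Φ (expSymbol k t)‖ ≤ 1)
    (hL : ∀ t : ℝ, 0 ≤ t → ∀ a, δ * ‖a‖ ≤ ‖(1 + Φ (expSymbol k t)) * a‖) (hμ : 0 < μ.re) :
    |μ.im| * (δ * ‖Φ (resolventSymbol k μ)‖) ≤ 2 * Real.pi := by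
  rcases eq_or_ne μ.im 0 with him | him
  · rw [him, abs_zero, zero_mul]
    positivity
  have : 0 < |μ.im| := abs_pos.2 him
  set t : ℝ := Real.pi / |μ.im| with ht
  have ht0 : 0 ≤ t := by positivity
  set r : ℝ := Real.exp (-μ.re * t)
  have hr1 : r ≤ 1 := Real.exp_le_one_iff.2 (by nlinarith)
  set R := Φ (resolventSymbol k μ)
  set S := Φ (expSymbol k t) * R with hS
  have hstep : ‖R + (r : ℂ) • S‖ ≤ t := by
    have := norm_map_resolventSymbol_sub_le hk hT hμ ht0
    rwa [ht, cexp_neg_mul_pi_div_abs_im him, neg_smul, sub_neg_eq_add] at this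
  have hrS : ‖(r : ℂ) • S‖ ≤ r * ‖R‖ := by
    have := norm_smul_map_expSymbol_mul_le hT (r : ℂ) ht0 R
    rwa [Complex.norm_real, Real.norm_of_nonneg (Real.exp_nonneg _)] at this
  have hrS' : ‖((1 - r : ℝ) : ℂ) • S‖ ≤ (1 - r) * ‖R‖ := by
    have := norm_smul_map_expSymbol_mul_le hT ((1 - r : ℝ) : ℂ) ht0 R
    rwa [Complex.norm_real, Real.norm_of_nonneg (sub_nonneg.2 hr1)] at this
  have hsplit : (1 + Φ (expSymbol k t)) * R = (R + (r : ℂ) • S) + ((1 - r : ℝ) : ℂ) • S := by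
    rw [add_mul, one_mul, add_assoc, ← add_smul]
    simp [hS]
  have hdefect : (1 - r) * ‖R‖ ≤ t := by
    linarith [norm_sub_le_norm_add R ((r : ℂ) • S)]
  calc |μ.im| * (δ * ‖R‖) ≤ |μ.im| * (t + t) := by
        gcongr
        refine (hL t ht0 R).trans (hsplit ▸ norm_add_le_of_le hstep (hrS'.trans hdefect))
    _ = 2 * Real.pi := by
        rw [ht]
        field_simp
        ring

theorem norm_mul_norm_map_resolventSymbol_le (hk : ∀ i, 0 ≤ k i)
    (hT : ∀ t : ℝ, 0 ≤ t → ‖Φ (expSymbol k t)‖ ≤ 1) (hδ : 0 < δ)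
    (hL : ∀ t : ℝ, 0 ≤ t → ∀ a, δ * ‖a‖ ≤ ‖(1 + Φ (expSymbol k t)) * a‖) (hμ : 0 < μ.re) :
    ‖μ‖ * ‖Φ (resolventSymbol k μ)‖ ≤ 2 + 2 * Real.pi / δ := by
  set R := Φ (resolventSymbol k μ)
  have him : |μ.im| * ‖R‖ ≤ 2 * Real.pi / δ := by
    rw [le_div_iff₀ hδ, mul_assoc, mul_comm ‖R‖]
    exact abs_im_mul_norm_map_resolventSymbol_le hk hT hL hμ
  calc ‖μ‖ * ‖R‖ ≤ (|μ.re| + |μ.im|) * ‖R‖ := by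
        gcongr
        exact Complex.norm_le_abs_re_add_abs_im μ
    _ = μ.re * ‖R‖ + |μ.im| * ‖R‖ := by rw [abs_of_pos hμ, add_mul]
    _ ≤ 2 + 2 * Real.pi / δ := add_le_add (re_mul_norm_map_resolventSymbol_le hk hT hμ) him

theorem mul_norm_map_mul_expSymbol_le (hk : ∀ i, 0 ≤ k i)
    (hR : ∀ μ : ℂ, 0 < μ.re → ‖μ‖ * ‖Φ (resolventSymbol k μ)‖ ≤ M) (ht : 0 < t) :
    t * ‖Φ ((fun i => (k i : ℂ)) * expSymbol k t)‖ ≤ Real.exp 1 * ((1 + M) * M ^ 2) := by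
  have := Fintype.ofFinite ι
  have ha : 0 < 1 / t := by positivity
  obtain ⟨hint, hinv⟩ := integral_cexp_smul_resolventSymbol hk ha ht
  have hbound (ξ : ℝ) : ‖Φ ((2 * Complex.exp ((2 * Real.pi * ξ * t : ℝ) * Complex.I)) •
      (resolventSymbol k (verticalLine (1 / t) ξ) ^ 2 -
        verticalLine (1 / t) ξ • resolventSymbol k (verticalLine (1 / t) ξ) ^ 3))‖ ≤
      2 * ((1 + M) * M ^ 2) * (‖verticalLine (1 / t) ξ‖ ^ 2)⁻¹ := by
    rw [map_smul, norm_smul, norm_mul, Complex.norm_exp_ofReal_mul_I, Complex.norm_two, mul_one,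
      mul_assoc]
    gcongr
    exact norm_map_resolventSymbol_sq_sub_le (hR _ (by simpa using ht))
      (verticalLine_ne_zero ha ξ)
  have hnorm := norm_map_integral_le Φ.toLinearMap.toContinuousLinearMap hint
    ((integrable_inv_norm_verticalLine_sq ha).const_mul _) hbound
  rw [hinv, integral_const_mul, integral_inv_norm_verticalLine_sq ha, map_smul, norm_smul] at hnorm
  have hconst : ‖(t : ℂ) ^ 2 * Complex.exp (-(((1 / t : ℝ) : ℂ) * t))‖ = t ^ 2 / Real.exp 1 := by
    rw [← Complex.ofReal_mul, one_div_mul_cancel ht.ne', norm_mul, norm_pow, Complex.norm_real,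
      Real.norm_of_nonneg ht.le, Complex.norm_exp]
    simp [Real.exp_neg, div_eq_mul_inv]
  rw [hconst] at hnorm
  refine le_of_mul_le_mul_left ?_ (show 0 < t / Real.exp 1 by positivity)
  calc t / Real.exp 1 * (t * ‖Φ ((fun i => (k i : ℂ)) * expSymbol k t)‖)
      = t ^ 2 / Real.exp 1 * ‖Φ ((fun i => (k i : ℂ)) * expSymbol k t)‖ := by ring
    _ ≤ 2 * ((1 + M) * M ^ 2) * (2 * (1 / t))⁻¹ := hnorm
    _ = t / Real.exp 1 * (Real.exp 1 * ((1 + M) * M ^ 2)) := by field_simp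

/-- The closed sector around the positive real axis bounded by the rays of slope `±κ`. -/
def sector (κ : ℝ) : Set ℂ := {z | |z.im| ≤ κ * z.re}

theorem pow_div_factorial_le_half_pow {x : ℝ} (hx : 0 ≤ x) {j : ℕ}
    (hxj : x ≤ j / (2 * Real.exp 1)) : x ^ j / j.factorial ≤ (1 / 2 : ℝ) ^ j := by
  calc x ^ j / j.factorial ≤ (j / (2 * Real.exp 1)) ^ j / j.factorial := by gcongr
    _ = (1 / 2) ^ j * (j ^ j / j.factorial / Real.exp j) := by
        rw [← mul_one (j : ℝ), Real.exp_nat_mul, mul_one, div_pow, mul_pow, one_div, inv_pow]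
        field_simp
    _ ≤ (1 / 2) ^ j := by
        refine mul_le_of_le_one_right (by positivity) ((div_le_one (Real.exp_pos _)).2 ?_)
        exact Real.pow_div_factorial_le_exp _ j.cast_nonneg j

theorem norm_map_expSymbol_le_two_of_mem_sector
    (hT : ∀ t : ℝ, 0 ≤ t → ‖Φ (expSymbol k t)‖ ≤ 1) (hC : 0 < C)
    (hD : ∀ t : ℝ, 0 < t → t * ‖Φ ((fun i => (k i : ℂ)) * expSymbol k t)‖ ≤ C)
    (hz : z ∈ sector (1 / (2 * Real.exp 1 * C))) : ‖Φ (expSymbol k z)‖ ≤ 2 := by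
  have hz' : |z.im| ≤ 1 / (2 * Real.exp 1 * C) * z.re := hz
  have hre : 0 ≤ z.re := (mul_nonneg_iff_of_pos_left (by positivity)).1 ((abs_nonneg _).trans hz')
  have hsum := (hasSum_expSymbol_add_mul_I k z.re z.im).mapL
    Φ.toLinearMap.toContinuousLinearMap
  rw [Complex.re_add_im] at hsum
  have hterm (j : ℕ) : ‖Φ (((-(z.im * Complex.I)) ^ j / (j.factorial : ℂ)) •
      ((fun i => (k i : ℂ)) ^ j * expSymbol k z.re))‖ ≤ (1 / 2 : ℝ) ^ j := by
    rcases eq_or_ne j 0 with rfl | hj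
    · simpa using hT z.re hre
    set D := ‖Φ ((fun i => (k i : ℂ)) * expSymbol k (z.re / j : ℝ))‖
    have hD' : z.re / j * D ≤ C := by
      rcases hre.eq_or_lt with hre0 | hpos
      · simpa [← hre0] using hC.le
      · exact hD _ (by positivity)
    rw [map_smul, norm_smul, norm_div, norm_pow, norm_neg, norm_mul, Complex.norm_I, mul_one,
      Complex.norm_real, Real.norm_eq_abs, Complex.norm_natCast, pow_mul_expSymbol k z.re hj,
      map_pow]
    calc |z.im| ^ j / j.factorial * ‖Φ ((fun i => (k i : ℂ)) * expSymbol k (z.re / j : ℝ)) ^ j‖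
        ≤ |z.im| ^ j / j.factorial * D ^ j := by
          gcongr
          exact norm_pow_le' _ (Nat.pos_of_ne_zero hj)
      _ = (|z.im| * D) ^ j / j.factorial := by rw [mul_pow, div_mul_eq_mul_div]
      _ ≤ (1 / 2) ^ j := pow_div_factorial_le_half_pow (by positivity) ?_
    calc |z.im| * D ≤ 1 / (2 * Real.exp 1 * C) * z.re * D := by gcongr
      _ = j / (2 * Real.exp 1) * (z.re / j * D / C) := by field_simp
      _ ≤ j / (2 * Real.exp 1) :=
          mul_le_of_le_one_right (by positivity) ((div_le_one hC).2 hD')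
  exact hsum.tsum_eq ▸ tsum_of_norm_bounded hasSum_geometric_two hterm

end Semigroup

/-! ### Decay of exponential sums bounded on a sector -/

section ExpSum

open Filter Topology

variable {ι E : Type*} [Fintype ι] [NormedAddCommGroup E] [NormedSpace ℂ E] {k : ι → ℕ} {x : ι → E}
  {κ K T b c t : ℝ} {d A : ℕ} {z : ℂ}

/-- The vector-valued exponential sum `∑ i, e^{-z k i} x i`, the orbit of a semigroup with
nonnegative integer spectrum continued to complex time. -/
def expSum (k : ι → ℕ) (x : ι → E) (z : ℂ) : E := ∑ i, Complex.exp (-z * k i) • x i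

theorem differentiable_expSum (k : ι → ℕ) (x : ι → E) : Differentiable ℂ (expSum k x) := fun _ =>
  DifferentiableAt.fun_sum fun i _ => DifferentiableAt.smul_const (by fun_prop) (x i)

theorem expSum_eq_exp_pow_smul (hx : ∀ i, k i < d → x i = 0) (z : ℂ) :
    expSum k x z = Complex.exp (-z) ^ d • ∑ i, Complex.exp (-z) ^ (k i - d) • x i := by
  rw [Finset.smul_sum]
  refine Finset.sum_congr rfl fun i _ => ?_
  rcases lt_or_ge (k i) d with hi | hi
  · simp only [hx i hi, smul_zero]
  · rw [smul_smul, ← pow_add, Nat.add_sub_cancel' hi, ← Complex.exp_nat_mul, mul_comm]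

/-- In the variable `w = e^{-z}` the sum has a zero of order `d` at `w = 0`, and on `Re z = π / κ`
the sector is wide enough to control the whole circle `|w| = e^{-π/κ}`. -/
theorem norm_expSum_le_of_pi_div_le_re (hκ : 0 < κ) (hK : ∀ z ∈ sector κ, ‖expSum k x z‖ ≤ K)
    (hx : ∀ i, k i < d → x i = 0) (hz : Real.pi / κ ≤ z.re) :
    ‖expSum k x z‖ ≤ K * Real.exp (-(d * (z.re - Real.pi / κ))) := by
  set a := Real.pi / κ with ha
  set H : ℂ → E := fun w => ∑ i, w ^ (k i - d) • x i
  have hdiff : Differentiable ℂ H := fun w =>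
    DifferentiableAt.fun_sum fun i _ => (differentiableAt_id.pow _).smul_const _
  have hcircle (w : ℂ) (hw : w ∈ frontier (Metric.ball (0 : ℂ) (Real.exp (-a)))) :
      ‖H w‖ ≤ Real.exp (d * a) * K := by
    rw [frontier_ball _ (Real.exp_pos _).ne', mem_sphere_zero_iff_norm] at hw
    have hw0 : w ≠ 0 := norm_pos_iff.1 (hw ▸ Real.exp_pos _)
    have hmem : -Complex.log w ∈ sector κ := by
      simp only [sector, Set.mem_ofPred_eq, Complex.neg_im, Complex.neg_re, Complex.log_im,
        Complex.log_re, hw, Real.log_exp, abs_neg, neg_neg, ha, mul_div_cancel₀ _ hκ.ne']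
      exact Complex.abs_arg_le_pi w
    have hbound := hK _ hmem
    rw [expSum_eq_exp_pow_smul hx, neg_neg, Complex.exp_log hw0, norm_smul, norm_pow, hw,
      ← Real.exp_nat_mul, mul_neg, Real.exp_neg] at hbound
    exact (inv_mul_le_iff₀ (Real.exp_pos _)).1 hbound
  have hnorm : ‖Complex.exp (-z)‖ = Real.exp (-z.re) := by rw [Complex.norm_exp, Complex.neg_re]
  have hmax := Complex.norm_le_of_forall_mem_frontier_norm_le Metric.isBounded_ball
    hdiff.diffContOnCl hcircle (z := Complex.exp (-z)) (by
      rw [closure_ball _ (Real.exp_pos _).ne', mem_closedBall_zero_iff, hnorm]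
      exact Real.exp_le_exp.2 (neg_le_neg hz))
  calc ‖expSum k x z‖ = Real.exp (d * -z.re) * ‖H (Complex.exp (-z))‖ := by
        rw [expSum_eq_exp_pow_smul hx, norm_smul, norm_pow, hnorm, ← Real.exp_nat_mul]
    _ ≤ Real.exp (d * -z.re) * (Real.exp (d * a) * K) := by gcongr
    _ = K * Real.exp (-(d * (z.re - a))) := by
        rw [← mul_assoc, ← Real.exp_add, mul_comm]
        ring_nf

theorem re_pow_eq_zero_of_abs_im_eq (hA : 2 ≤ A)
    (hz : |z.im| = Real.tan (Real.pi / (2 * A)) * z.re) : (z ^ A).re = 0 := by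
  set φ := Real.pi / (2 * A) with hφ
  have hA' : (2 : ℝ) ≤ A := by exact_mod_cast hA
  have hcos : 0 < Real.cos φ := by
    refine Real.cos_pos_of_mem_Ioo ⟨(neg_neg_of_pos (by positivity)).trans (by positivity), ?_⟩
    exact div_lt_div_of_pos_left Real.pi_pos two_pos (by linarith)
  have hpolar : (z.re : ℂ) + |z.im| * Complex.I =
      ((z.re / Real.cos φ : ℝ) : ℂ) * Complex.exp (φ * Complex.I) := by
    rw [hz, Real.tan_eq_sin_div_cos, Complex.exp_mul_I, ← Complex.ofReal_cos, ← Complex.ofReal_sin]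
    have hcos' : (Real.cos φ : ℂ) ≠ 0 := Complex.ofReal_ne_zero.2 hcos.ne'
    push_cast at hcos' ⊢
    field_simp
  have hpow : (((z.re : ℂ) + |z.im| * Complex.I) ^ A).re = 0 := by
    have hangle : (A : ℂ) * (φ * Complex.I) = ((Real.pi / 2 : ℝ) : ℂ) * Complex.I := by
      have : (A : ℝ) * φ = Real.pi / 2 := by
        rw [hφ]
        field_simp
      rw [← this]
      push_cast
      ring
    rw [hpolar, mul_pow, ← Complex.exp_nat_mul, hangle, ← Complex.ofReal_pow, Complex.re_ofReal_mul,
      Complex.exp_ofReal_mul_I_re, Real.cos_pi_div_two, mul_zero]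
  rcases abs_choice z.im with habs | habs
  · rwa [habs, Complex.re_add_im] at hpow
  · have hconj : (z.re : ℂ) + (-z.im : ℝ) * Complex.I = (starRingEnd ℂ) z := by
      apply Complex.ext <;> simp
    rwa [habs, hconj, ← map_pow, Complex.conj_re] at hpow

/-- The part of the interior of `sector T` to the left of the line `Re = b`. -/
def truncatedSector (T b : ℝ) : Set ℂ := {z | |z.im| < T * z.re ∧ z.re < b}

theorem isOpen_truncatedSector (T b : ℝ) : IsOpen (truncatedSector T b) :=
  (isOpen_lt (f := fun z : ℂ => |z.im|) (by fun_prop) (by fun_prop)).and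
    (isOpen_lt Complex.continuous_re continuous_const)

theorem closure_truncatedSector_subset (T b : ℝ) :
    closure (truncatedSector T b) ⊆ {z | |z.im| ≤ T * z.re ∧ z.re ≤ b} :=
  closure_minimal (fun _ hz => ⟨hz.1.le, hz.2.le⟩)
    ((isClosed_le (f := fun z : ℂ => |z.im|) (by fun_prop) (by fun_prop)).and
      (isClosed_le Complex.continuous_re continuous_const))

theorem norm_le_of_mem_closure_truncatedSector (hT : 0 < T)
    (hz : z ∈ closure (truncatedSector T b)) : ‖z‖ ≤ b * (1 + T) := by
  obtain ⟨him, hre⟩ := closure_truncatedSector_subset T b hz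
  have hre0 : 0 ≤ z.re := (mul_nonneg_iff_of_pos_left hT).1 ((abs_nonneg _).trans him)
  calc ‖z‖ ≤ |z.re| + |z.im| := Complex.norm_le_abs_re_add_abs_im z
    _ ≤ z.re * (1 + T) := by
        rw [abs_of_nonneg hre0]
        linarith
    _ ≤ b * (1 + T) := by gcongr

theorem isBounded_truncatedSector (hT : 0 < T) (b : ℝ) :
    Bornology.IsBounded (truncatedSector T b) :=
  isBounded_iff_forall_norm_le.2 ⟨b * (1 + T), fun _ hz =>
    norm_le_of_mem_closure_truncatedSector hT (subset_closure hz)⟩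

theorem abs_im_eq_or_re_eq_of_mem_frontier_truncatedSector
    (hz : z ∈ frontier (truncatedSector T b)) : |z.im| = T * z.re ∨ z.re = b := by
  obtain ⟨him, hre⟩ := closure_truncatedSector_subset T b hz.1
  have hnot : z ∉ truncatedSector T b := (isOpen_truncatedSector T b).interior_eq ▸ hz.2
  exact him.eq_or_lt.imp_right fun hlt => hre.eq_or_lt.resolve_right fun hlt' => hnot ⟨hlt, hlt'⟩

theorem tan_pi_div_two_mul_pos (hA : 2 ≤ A) : 0 < Real.tan (Real.pi / (2 * A)) := by
  have hA' : (2 : ℝ) ≤ A := by exact_mod_cast hA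
  exact Real.tan_pos_of_pos_of_lt_pi_div_two (by positivity)
    (div_lt_div_of_pos_left Real.pi_pos two_pos (by linarith))

/-- `Re z ^ A = 0` on the two rays, while on the vertical side the decay of
`norm_expSum_le_of_pi_div_le_re` absorbs the weight. -/
theorem exp_mul_norm_expSum_le_of_mem_frontier (hκ : 0 < κ)
    (hK : ∀ z ∈ sector κ, ‖expSum k x z‖ ≤ K) (hx : ∀ i, k i < d → x i = 0) (hA : 2 ≤ A)
    (hAκ : Real.tan (Real.pi / (2 * A)) ≤ κ) (hc : 0 < c)
    (hcA : c * (2 * (Real.pi / κ) * (1 + κ)) ^ A ≤ Real.pi / κ)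
    (hz : z ∈ frontier (truncatedSector (Real.tan (Real.pi / (2 * A))) (2 * (Real.pi / κ)))) :
    Real.exp (c * d * (z ^ A).re) * ‖expSum k x z‖ ≤ K := by
  set a := Real.pi / κ with ha
  have hT := tan_pi_div_two_mul_pos hA
  rcases abs_im_eq_or_re_eq_of_mem_frontier_truncatedSector hz with him | hre
  · rw [re_pow_eq_zero_of_abs_im_eq hA him, mul_zero, Real.exp_zero, one_mul]
    have hre0 : 0 ≤ z.re := (mul_nonneg_iff_of_pos_left hT).1 (him ▸ abs_nonneg _)
    exact hK z (him.trans_le (by gcongr))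
  · have ha0 : 0 < a := by positivity
    have hweight : c * d * (z ^ A).re ≤ d * a := by
      calc c * d * (z ^ A).re ≤ c * d * (2 * a * (1 + κ)) ^ A := by
            gcongr
            refine (Complex.re_le_norm _).trans ((norm_pow z A).trans_le ?_)
            gcongr
            exact (norm_le_of_mem_closure_truncatedSector hT hz.1).trans (by gcongr)
        _ = d * (c * (2 * a * (1 + κ)) ^ A) := by ring
        _ ≤ d * a := by gcongr
    have hfar := norm_expSum_le_of_pi_div_le_re hκ hK hx (z := z) (by rw [← ha, hre]; linarith)
    rw [hre, ← ha] at hfar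
    calc Real.exp (c * d * (z ^ A).re) * ‖expSum k x z‖
        ≤ Real.exp (d * a) * (K * Real.exp (-(d * (2 * a - a)))) := by gcongr
      _ = K * (Real.exp (d * a) * Real.exp (-(d * (2 * a - a)))) := by ring
      _ = K := by rw [two_mul, add_sub_cancel_right, ← Real.exp_add, add_neg_cancel,
          Real.exp_zero, mul_one]

/-- Maximum principle for `e^{c d z^A} • expSum k x z` on the truncated sector. -/
theorem norm_expSum_le_of_lt (hκ : 0 < κ) (hK : ∀ z ∈ sector κ, ‖expSum k x z‖ ≤ K)
    (hx : ∀ i, k i < d → x i = 0) (hA : 2 ≤ A) (hAκ : Real.tan (Real.pi / (2 * A)) ≤ κ) (hc : 0 < c)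
    (hcA : c * (2 * (Real.pi / κ) * (1 + κ)) ^ A ≤ Real.pi / κ) (ht : 0 < t)
    (ht' : t < 2 * (Real.pi / κ)) :
    ‖expSum k x t‖ ≤ K * Real.exp (-(c * d * t ^ A)) := by
  have hT := tan_pi_div_two_mul_pos hA
  let G (z : ℂ) : E := Complex.exp (((c * d : ℝ) : ℂ) * z ^ A) • expSum k x z
  have hdiff : Differentiable ℂ G :=
    Differentiable.smul (by fun_prop) (differentiable_expSum k x)
  have hnorm (z : ℂ) : ‖G z‖ = Real.exp (c * d * (z ^ A).re) * ‖expSum k x z‖ := by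
    rw [norm_smul, Complex.norm_exp, Complex.re_ofReal_mul]
  have hmax := Complex.norm_le_of_forall_mem_frontier_norm_le (isBounded_truncatedSector hT _)
    hdiff.diffContOnCl
    (fun z hz => (hnorm z).trans_le
      (exp_mul_norm_expSum_le_of_mem_frontier hκ hK hx hA hAκ hc hcA hz))
    (z := (t : ℂ)) (subset_closure ⟨by simpa using mul_pos hT ht, by simpa using ht'⟩)
  rw [hnorm, ← Complex.ofReal_pow, Complex.ofReal_re, ← le_div_iff₀' (Real.exp_pos _)] at hmax
  rwa [Real.exp_neg, ← div_eq_mul_inv]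

theorem exists_tan_pi_div_le (hκ : 0 < κ) :
    ∃ A : ℕ, 2 ≤ A ∧ Real.tan (Real.pi / (2 * A)) ≤ κ := by
  have hangle : Tendsto (fun A : ℕ => Real.pi / (2 * (A : ℝ))) atTop (𝓝 0) :=
    tendsto_const_nhds.div_atTop (tendsto_natCast_atTop_atTop.const_mul_atTop two_pos)
  have htan : Tendsto (fun A : ℕ => Real.tan (Real.pi / (2 * (A : ℝ)))) atTop (𝓝 0) := by
    have hcont : ContinuousAt Real.tan 0 := Real.continuousAt_tan.2 (by simp)
    exact (Real.tan_zero ▸ hcont.tendsto).comp hangle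
  exact ((eventually_ge_atTop 2).and (htan.eventually (ge_mem_nhds hκ))).exists

theorem exists_forall_norm_expSum_le (hκ : 0 < κ) :
    ∃ A : ℕ, 2 ≤ A ∧ ∃ c : ℝ, 0 < c ∧
      ∀ {ι E : Type*} [Fintype ι] [NormedAddCommGroup E] [NormedSpace ℂ E] (k : ι → ℕ) (x : ι → E)
        (K : ℝ) (d : ℕ), (∀ z ∈ sector κ, ‖expSum k x z‖ ≤ K) → (∀ i, k i < d → x i = 0) →
        ∀ t : ℝ, 0 ≤ t → ‖expSum k x t‖ ≤ K * Real.exp (-(c * d * min t (t ^ A))) := by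
  obtain ⟨A, hA, hAκ⟩ := exists_tan_pi_div_le hκ
  set a := Real.pi / κ
  set Q := (2 * a * (1 + κ)) ^ A
  have hQ0 : 0 < Q := by positivity
  have hcA : min (1 / 2) (a / Q) * Q ≤ a :=
    (mul_le_mul_of_nonneg_right (min_le_right _ _) hQ0.le).trans_eq (div_mul_cancel₀ a hQ0.ne')
  refine ⟨A, hA, min (1 / 2) (a / Q), by positivity, fun k x K d hK hx t ht => ?_⟩
  set c := min (1 / 2) (a / Q)
  have hc0 : 0 < c := by positivity
  have hK0 : 0 ≤ K := (norm_nonneg _).trans (hK 0 (by simp [sector]))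
  rcases lt_or_ge t (2 * a) with hlt | hge
  · rcases ht.eq_or_lt with rfl | hpos
    · simpa [zero_pow (by lia : A ≠ 0)] using hK 0 (by simp [sector])
    · refine (norm_expSum_le_of_lt hκ hK hx hA hAκ hc0 hcA hpos hlt).trans ?_
      gcongr
      exact min_le_right _ _
  · have hmin : c * d * min t (t ^ A) ≤ d * (t - a) := by
      calc c * d * min t (t ^ A) ≤ 1 / 2 * d * t := by
            gcongr
            · exact min_le_left _ _
            · exact min_le_left _ _
        _ = d * (t / 2) := by ring
        _ ≤ d * (t - a) := by
            gcongr
            linarith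
    refine (norm_expSum_le_of_pi_div_le_re hκ hK hx (z := t) ?_).trans ?_
    · have : 0 < a := by positivity
      rw [Complex.ofReal_re]
      linarith
    · rw [Complex.ofReal_re]
      gcongr

end ExpSum

/-! ### Walsh multipliers -/

/-- The functional calculus of a finite complete system of orthogonal idempotents. -/
def algHomOfIdempotents {ι 𝒜 : Type*} [Fintype ι] [Ring 𝒜] [Algebra ℂ 𝒜] (e : ι → 𝒜)
    (he : CompleteOrthogonalIdempotents e) : (ι → ℂ) →ₐ[ℂ] 𝒜 := by
  classical
  refine AlgHom.ofLinearMap (Fintype.linearCombination ℂ e) ?_ fun a b => ?_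
  · simp [Fintype.linearCombination_apply, he.complete]
  · simp_rw [Fintype.linearCombination_apply, Finset.sum_mul_sum, smul_mul_smul_comm, he.mul_eq,
      smul_ite, smul_zero, Finset.sum_ite_eq, Finset.mem_univ, if_true, Pi.mul_apply]

theorem algHomOfIdempotents_apply {ι 𝒜 : Type*} [Fintype ι] [Ring 𝒜] [Algebra ℂ 𝒜] {e : ι → 𝒜}
    (he : CompleteOrthogonalIdempotents e) (m : ι → ℂ) :
    algHomOfIdempotents e he m = ∑ i, m i • e i :=
  rfl

section Multiplier

variable {n : ℕ} {P : ℝ≥0∞}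

/-- The projection `f ↦ f̂(A) w_A` of `L_P` of the cube, normed by counting measure, onto the
Walsh functions of frequency `A`. -/
def walshProj (A : Finset (Fin n)) :
    PiLp P (fun _ : Fin n → Bool => X) →L[ℂ] PiLp P (fun _ : Fin n → Bool => X) :=
  (PiLp.continuousLinearEquiv P ℂ fun _ : Fin n → Bool => X).symm.toContinuousLinearMap ∘L
    ContinuousLinearMap.pi fun ε => walsh A ε •
      (2 ^ n : ℝ)⁻¹ • ∑ δ, walsh A δ • (PiLp.proj P (fun _ => X) δ : _ →L[ℂ] X)

theorem walshProj_apply (A : Finset (Fin n)) (f : PiLp P (fun _ : Fin n → Bool => X))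
    (ε : Fin n → Bool) : walshProj A f ε = walsh A ε • coeff f A := by
  simp [walshProj, coeff]

theorem walshProj_toLp_eq_zero_of_tailSpace {f : (Fin n → Bool) → X} {d : ℕ} (hf : tailSpace f d)
    {A : Finset (Fin n)} (hA : A.card < d) : walshProj A (WithLp.toLp P f) = 0 := by
  ext ε
  simp [walshProj_apply, hf A hA]

variable [Fact (1 ≤ P)]

theorem completeOrthogonalIdempotents_walshProj : CompleteOrthogonalIdempotents
    (walshProj (n := n) (P := P) (X := X)) := by
  have hmul (A B : Finset (Fin n)) (f : PiLp P (fun _ : Fin n → Bool => X)) (ε : Fin n → Bool) :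
      walshProj A (walshProj B f) ε = walsh A ε • if A = B then coeff f B else 0 := by
    rw [walshProj_apply, ← coeff_walsh_smul]
    congr 2
    exact funext (walshProj_apply B f)
  refine CompleteOrthogonalIdempotents.iff_ortho_complete.2 ⟨fun A B hAB => ?_, ?_⟩
  · ext f ε
    simp [mul_apply_eq_comp, hmul, hAB]
  · ext f ε
    simp [walshProj_apply, sum_walsh_smul_coeff]

/-- The Fourier multiplier `f ↦ ∑_A m(A) f̂(A) w_A`, as an operator depending multiplicatively on
its symbol `m`. -/
def walshMultiplier : (Finset (Fin n) → ℂ) →ₐ[ℂ]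
    (PiLp P (fun _ : Fin n → Bool => X) →L[ℂ] PiLp P (fun _ : Fin n → Bool => X)) :=
  algHomOfIdempotents walshProj completeOrthogonalIdempotents_walshProj

theorem walshMultiplier_apply (m : Finset (Fin n) → ℂ) (f : PiLp P (fun _ : Fin n → Bool => X)) :
    walshMultiplier m f = ∑ A, m A • walshProj A f := by
  simp [walshMultiplier, algHomOfIdempotents_apply]

theorem walshMultiplier_apply_apply (m : Finset (Fin n) → ℂ)
    (f : PiLp P (fun _ : Fin n → Bool => X)) (ε : Fin n → Bool) :
    walshMultiplier m f ε = ∑ A, m A • walsh A ε • coeff f A := by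
  simp [walshMultiplier_apply, walshProj_apply]

/-- The permutation of the cube reversing the `i`-th sign. -/
def signFlip (i : Fin n) : Equiv.Perm (Fin n → Bool) :=
  Function.Involutive.toPerm (fun ε => Function.update ε i (!ε i)) fun ε => by simp

/-- The eigenvalue of `signFlip i` on the Walsh function of frequency `A`. -/
def signFlipSymbol (i : Fin n) (A : Finset (Fin n)) : ℂ := if i ∈ A then -1 else 1

theorem walsh_signFlip (A : Finset (Fin n)) (i : Fin n) (ε : Fin n → Bool) :
    walsh A (signFlip i ε) = (if i ∈ A then -1 else 1) * walsh A ε := by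
  have hsgn (j : Fin n) : sgn (signFlip i ε j) = (if j = i then -1 else 1) * sgn (ε j) := by
    rw [show signFlip i ε = Function.update ε i (!ε i) from rfl]
    rcases eq_or_ne j i with rfl | hj
    · cases ε j <;> simp [sgn]
    · simp [hj]
  simp_rw [walsh, hsgn, Finset.prod_mul_distrib, Finset.prod_ite_eq']

theorem norm_walshMultiplier_signFlipSymbol_le (i : Fin n) :
    ‖walshMultiplier (X := X) (P := P) (signFlipSymbol i)‖ ≤ 1 := by
  have hflip : walshMultiplier (X := X) (P := P) (signFlipSymbol i) =
      (LinearIsometryEquiv.piLpCongrLeft P ℂ X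
        (signFlip i)).toLinearIsometry.toContinuousLinearMap := by
    ext f ε
    have hsymm : (signFlip i).symm = signFlip i := rfl
    have hinv := sum_walsh_smul_coeff f.ofLp (signFlip i ε)
    simp_rw [walsh_signFlip] at hinv
    simp [walshMultiplier_apply_apply, signFlipSymbol, hsymm, ← hinv]
  rw [hflip]
  exact LinearIsometry.norm_toContinuousLinearMap_le _

/-- The symbol of the conditional expectation given the coordinates outside `S`. -/
def condExpSymbol (S A : Finset (Fin n)) : ℂ := if Disjoint A S then 1 else 0

theorem isIdempotentElem_condExpSymbol (S : Finset (Fin n)) :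
    IsIdempotentElem (condExpSymbol S) := by
  funext A
  simp [condExpSymbol]

theorem condExpSymbol_eq_prod (S : Finset (Fin n)) :
    condExpSymbol S = ∏ i ∈ S, (2⁻¹ : ℂ) • (1 + signFlipSymbol i) := by
  funext A
  have hfactor (i : Fin n) : (2⁻¹ : ℂ) • (1 + signFlipSymbol i A) = if i ∉ A then 1 else 0 := by
    rw [signFlipSymbol]
    split_ifs <;> norm_num
  simp_rw [condExpSymbol, Finset.prod_apply, Pi.smul_apply, Pi.add_apply, Pi.one_apply, hfactor,
    Finset.prod_ite_zero, Finset.prod_const_one, Finset.disjoint_right]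

theorem norm_walshMultiplier_condExpSymbol_le (S : Finset (Fin n)) :
    ‖walshMultiplier (X := X) (P := P) (condExpSymbol S)‖ ≤ 1 := by
  have hfactor (i : Fin n) :
      ‖walshMultiplier (X := X) (P := P) ((2⁻¹ : ℂ) • (1 + signFlipSymbol i))‖ ≤ 1 := by
    have hadd : ‖1 + walshMultiplier (X := X) (P := P) (signFlipSymbol i)‖ ≤ 1 + 1 :=
      norm_add_le_of_le ContinuousLinearMap.norm_id_le (norm_walshMultiplier_signFlipSymbol_le i)
    rw [map_smul, map_add, map_one, norm_smul, norm_inv, Complex.norm_ofNat]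
    linarith
  rw [condExpSymbol_eq_prod]
  exact norm_map_prod_le_one (walshMultiplier (X := X) (P := P)).toRingHom hfactor S

/-- Resampling each coordinate independently with probability `1 - r`, where `S` is the set of
resampled coordinates. -/
theorem sum_smul_condExpSymbol (r : ℝ) :
    ∑ S : Finset (Fin n), (((1 - r) ^ S.card * r ^ (n - S.card) : ℝ) : ℂ) • condExpSymbol S =
      fun A => (r : ℂ) ^ A.card := by
  funext A
  have hprod : ∏ i, ((if i ∉ A then 1 - (r : ℂ) else 0) + r) = (r : ℂ) ^ A.card := by
    have hfactor (i : Fin n) :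
        (if i ∉ A then 1 - (r : ℂ) else 0) + r = if i ∈ A then (r : ℂ) else 1 := by
      split_ifs <;> simp_all
    simp_rw [hfactor, Finset.prod_ite_mem, Finset.univ_inter, Finset.prod_const]
  rw [← hprod, Finset.prod_add, Finset.powerset_univ]
  simp_rw [Finset.prod_ite_zero]
  simp [condExpSymbol, Finset.disjoint_right, Finset.card_univ_sdiff]

theorem expSymbol_card_eq_sum (t : ℝ) :
    expSymbol (fun A : Finset (Fin n) => (A.card : ℝ)) t = ∑ S : Finset (Fin n),
      (((1 - Real.exp (-t)) ^ S.card * Real.exp (-t) ^ (n - S.card) : ℝ) : ℂ) •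
        condExpSymbol S := by
  rw [sum_smul_condExpSymbol]
  funext A
  rw [expSymbol, Complex.ofReal_exp, ← Complex.exp_nat_mul]
  push_cast
  ring_nf

theorem resampling_weight_nonneg {t : ℝ} (ht : 0 ≤ t) (S : Finset (Fin n)) :
    0 ≤ (1 - Real.exp (-t)) ^ S.card * Real.exp (-t) ^ (n - S.card) := by
  have hle : 0 ≤ 1 - Real.exp (-t) := sub_nonneg.2 (Real.exp_le_one_iff.2 (neg_nonpos.2 ht))
  positivity

theorem sum_resampling_weight (r : ℝ) :
    ∑ S : Finset (Fin n), (1 - r) ^ S.card * r ^ (n - S.card) = 1 := by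
  simpa using Fintype.sum_pow_mul_eq_add_pow (Fin n) (1 - r) r

theorem norm_walshMultiplier_expSymbol_le_one {t : ℝ} (ht : 0 ≤ t) :
    ‖walshMultiplier (X := X) (P := P) (expSymbol (fun A : Finset (Fin n) => (A.card : ℝ)) t)‖ ≤
      1 := by
  rw [expSymbol_card_eq_sum]
  exact norm_map_sum_smul_le (walshMultiplier (X := X) (P := P)).toLinearMap
    (resampling_weight_nonneg ht) (sum_resampling_weight _) norm_walshMultiplier_condExpSymbol_le

theorem BeckConvex.mul_norm_le_norm_one_add_walshMultiplier_mul {J : Type*} [Fintype J]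
    [Nonempty J] {ρ : ℝ} (h : BeckConvex J (PiLp P fun _ : Fin n → Bool => X) ρ) {t : ℝ}
    (ht : 0 ≤ t)
    (a : PiLp P (fun _ : Fin n → Bool => X) →L[ℂ] PiLp P (fun _ : Fin n → Bool => X)) :
    2 * (1 - ρ / Fintype.card J) / (Fintype.card J * 2 ^ Fintype.card J) * ‖a‖ ≤
      ‖(1 + walshMultiplier (expSymbol (fun A : Finset (Fin n) => (A.card : ℝ)) t)) * a‖ := by
  rw [expSymbol_card_eq_sum]
  exact h.mul_norm_le_norm_one_add_mul walshMultiplier (resampling_weight_nonneg ht)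
    (sum_resampling_weight _) isIdempotentElem_condExpSymbol
    norm_walshMultiplier_condExpSymbol_le a

theorem toLp_heat (t : ℝ) (f : (Fin n → Bool) → X) :
    WithLp.toLp P (heat t f) = expSum Finset.card (fun A => walshProj A (WithLp.toLp P f)) t := by
  ext ε
  simp only [expSum, heat, WithLp.ofLp_sum, WithLp.ofLp_smul, Finset.sum_apply, Pi.smul_apply,
    walshProj_apply]
  refine Finset.sum_congr rfl fun A _ => ?_
  rw [← Complex.coe_smul (Real.exp _)]
  push_cast
  rfl

theorem expSum_walshProj (z : ℂ) (f : PiLp P fun _ : Fin n → Bool => X) :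
    expSum Finset.card (fun A => walshProj A f) z =
      walshMultiplier (expSymbol (fun A : Finset (Fin n) => (A.card : ℝ)) z) f := by
  simp [walshMultiplier_apply, expSum, expSymbol]

theorem lpNorm_eq_mul_norm_toLp {Y : Type*} [NormedAddCommGroup Y] {p : ℝ} (hp : 0 < p)
    (f : (Fin n → Bool) → Y) :
    lpNorm p f = ((2 ^ n : ℝ)⁻¹) ^ (1 / p) * ‖WithLp.toLp (ENNReal.ofReal p) f‖ := by
  have hp' : (ENNReal.ofReal p).toReal = p := ENNReal.toReal_ofReal hp.le
  rw [PiLp.norm_eq_sum (by rwa [hp']), hp', lpNorm, Real.mul_rpow (by positivity) (by positivity)]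

end Multiplier

/-! ### Smoothing -/

theorem KConvex.exists_norm_walshMultiplier_expSymbol_le_two (hX : KConvex X) {P : ℝ≥0∞}
    [Fact (1 ≤ P)] (hP1 : 1 < P) (hP : P ≠ ⊤) :
    ∃ κ : ℝ, 0 < κ ∧ ∀ (n : ℕ), ∀ z ∈ sector κ,
      ‖walshMultiplier (X := X) (P := P)
        (expSymbol (fun A : Finset (Fin n) => (A.card : ℝ)) z)‖ ≤ 2 := by
  obtain ⟨m, hm⟩ := hX.exists_norm_sum_smul_lt
  obtain ⟨ρ, hρ, hbeck⟩ :=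
    (beckConvex_of_exists_norm_sum_smul_lt hm).exists_piLp (by linarith) P hP1 hP
  let N : ℝ := Fintype.card (Fin m → Bool)
  have hN : 0 < N := Nat.cast_pos.2 Fintype.card_pos
  let δ : ℝ := 2 * (1 - ρ / N) / (N * 2 ^ Fintype.card (Fin m → Bool))
  have hδ : 0 < δ := by
    have hρN : 0 < 1 - ρ / N := sub_pos.2 ((div_lt_one hN).2 hρ)
    positivity
  let M : ℝ := 2 + 2 * Real.pi / δ
  let C : ℝ := Real.exp 1 * ((1 + M) * M ^ 2)
  have hC : 0 < C := by positivity
  refine ⟨1 / (2 * Real.exp 1 * C), by positivity, fun n z hz => ?_⟩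
  have hk (A : Finset (Fin n)) : (0 : ℝ) ≤ A.card := Nat.cast_nonneg _
  have hresolvent (μ : ℂ) (hμ : 0 < μ.re) :
      ‖μ‖ * ‖walshMultiplier (X := X) (P := P) (resolventSymbol (fun A => (A.card : ℝ)) μ)‖ ≤ M :=
    norm_mul_norm_map_resolventSymbol_le hk (fun t => norm_walshMultiplier_expSymbol_le_one) hδ
      (fun t ht a => (hbeck _).mul_norm_le_norm_one_add_walshMultiplier_mul ht a) hμ
  exact norm_map_expSymbol_le_two_of_mem_sector (fun t => norm_walshMultiplier_expSymbol_le_one)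
    hC (fun t => mul_norm_map_mul_expSymbol_le hk hresolvent) hz

theorem stmt5_general (hX : KConvex X) {p : ℝ} (hp : 1 < p) :
    ∃ c : ℝ, 0 < c ∧ ∃ A : ℕ, 2 ≤ A ∧
      ∀ (n d : ℕ) (f : (Fin n → Bool) → X), tailSpace f d → ∀ t : ℝ, 0 ≤ t →
        lpNorm p (heat t f) ≤ 2 * Real.exp (-(c * d * min t (t ^ A))) * lpNorm p f := by
  have hP : 1 < ENNReal.ofReal p := ENNReal.one_lt_ofReal.2 hp
  have : Fact (1 ≤ ENNReal.ofReal p) := ⟨hP.le⟩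
  obtain ⟨κ, hκ, hsector⟩ :=
    hX.exists_norm_walshMultiplier_expSymbol_le_two hP ENNReal.ofReal_ne_top
  obtain ⟨A, hA, c, hc, hdecay⟩ := exists_forall_norm_expSum_le hκ
  refine ⟨c, hc, A, hA, fun n d f hf t ht => ?_⟩
  let F : PiLp (ENNReal.ofReal p) fun _ : Fin n → Bool => X := WithLp.toLp _ f
  have hbound : ∀ z ∈ sector κ, ‖expSum Finset.card (fun A => walshProj A F) z‖ ≤ 2 * ‖F‖ := by
    intro z hz
    rw [expSum_walshProj]
    exact ContinuousLinearMap.le_of_opNorm_le _ (hsector n z hz) F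
  have hheat := hdecay Finset.card _ _ d hbound
    (fun _ => walshProj_toLp_eq_zero_of_tailSpace hf) t ht
  rw [lpNorm_eq_mul_norm_toLp (by linarith), lpNorm_eq_mul_norm_toLp (by linarith), toLp_heat]
  calc _ ≤ ((2 ^ n : ℝ)⁻¹) ^ (1 / p) * (2 * ‖F‖ * Real.exp (-(c * d * min t (t ^ A)))) := by gcongr
    _ = _ := by ring

/-- **Mendel–Naor heat smoothing theorem** for `K`-convex targets. -/
theorem stmt5 {X : Type*} [NormedAddCommGroup X] [NormedSpace ℂ X] [CompleteSpace X]
    (hX : KConvex X) (p : ℝ) (hp : 1 < p) :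
    ∃ c C : ℝ, 0 < c ∧ 0 < C ∧ ∃ A : ℝ, 1 ≤ A ∧
      ∀ n d : ℕ, d < n → ∀ f : (Fin n → Bool) → X, tailSpace f d → ∀ t : ℝ, 0 ≤ t →
        lpNorm p (heat t f) ≤
          C * Real.exp (-(c * d * min t (t ^ A))) * lpNorm p f := by
  obtain ⟨c, hc, A, hA, hsmooth⟩ := stmt5_general hX hp
  exact ⟨c, 2, hc, two_pos, A, mod_cast one_le_two.trans hA, fun n d _ f hf t ht => by
    simpa only [Real.rpow_natCast] using hsmooth n d f hf t ht⟩

end HammingCube
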